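/- arXiv:1607.08536 — 4 statements merged into one kernel-verified Lean document; each statement's English description precedes it below -/
import Mathlib

section
/- Let R > 0, let k ≥ 1 be an integer, and assume that either ñ = 2, or ñ > 2 and p ≤ ñ/(ñ−2). Consider either the equation −P⁺[w](r) = |w(r)|^{p−1}w(r) (the radial form of −𝓜⁺_{λ,Λ}(D²u) = |u|^{p−1}u) or the equation −P⁻[w](r) = |w(r)|^{p−1}w(r) (the radial form of −𝓜⁻_{λ,Λ}(D²u) = |u|^{p−1}u). Then there exist a function w : [0,R] → ℝ, continuously differentiable on [0,R] and twice continuously differentiable on (0,R], with w'(0) = 0, w(R) = 0, satisfying the chosen equation for all r ∈ (0,R), and a finite sequence 0 = r₀ < r₁ < … < r_k = R such that w(0) > 0 and (−1)^{j−1} w(r) > 0 for all r ∈ (r_{j−1}, r_j), j = 1,…,k. Moreover there also exists such a solution with w(0) < 0 and (−1)^{j} w(r) > 0 on (r_{j−1}, r_j) for j = 1,…,k. (These are radial sign-changing solutions with k nodal regions of the Dirichlet problem for the Pucci extremal operators in the ball B_R.) -/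
open Real Set

/-- `P⁺[u](r)`: the Pucci maximal operator `𝓜⁺_{λ,Λ}` evaluated on the Hessian of the
radial function `v(x) = u(|x|)`, expressed through `u'` and `u''`. -/
noncomputable def Pp (n : ℕ) (lam Lam : ℝ) (u' u'' : ℝ → ℝ) (r : ℝ) : ℝ :=
  Lam * max (u'' r) 0 + lam * min (u'' r) 0 +
    ((n : ℝ) - 1) * (Lam * max (u' r / r) 0 + lam * min (u' r / r) 0)

/-- `P⁻[u](r)`: the Pucci minimal operator `𝓜⁻_{λ,Λ}` evaluated on the Hessian of the
radial function `v(x) = u(|x|)`. -/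
noncomputable def Pm (n : ℕ) (lam Lam : ℝ) (u' u'' : ℝ → ℝ) (r : ℝ) : ℝ :=
  lam * max (u'' r) 0 + Lam * min (u'' r) 0 +
    ((n : ℝ) - 1) * (lam * max (u' r / r) 0 + Lam * min (u' r / r) 0)

/-- Existence of a radial solution in the ball `B_R` of `−P[w] = |w|^{p−1} w` with `k` nodal
regions and sign `sign` at the origin: `w ∈ C¹([0,R]) ∩ C²((0,R])`, `w'(0) = 0`, `w(R) = 0`,
zeros `0 = r₀ < r₁ < … < r_k = R` and alternating sign on the nodal annuli. -/
def NodalBallSol (p R : ℝ) (k : ℕ) (P : (ℝ → ℝ) → (ℝ → ℝ) → ℝ → ℝ) (sign : ℝ) : Prop :=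
  ∃ (w w' w'' : ℝ → ℝ) (rr : ℕ → ℝ),
    rr 0 = 0 ∧ rr k = R ∧ (∀ j < k, rr j < rr (j + 1)) ∧
    (∀ r ∈ Set.Icc (0 : ℝ) R, HasDerivAt w (w' r) r) ∧
    ContinuousOn w' (Set.Icc (0 : ℝ) R) ∧
    (∀ r ∈ Set.Ioc (0 : ℝ) R, HasDerivAt w' (w'' r) r) ∧
    ContinuousOn w'' (Set.Ioc (0 : ℝ) R) ∧
    w' 0 = 0 ∧ w R = 0 ∧
    (∀ r ∈ Set.Ioo (0 : ℝ) R, -P w' w'' r = |w r| ^ (p - 1) * w r) ∧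
    0 < sign * w 0 ∧
    (∀ j ≤ k, 1 ≤ j → w (rr j) = 0) ∧
    (∀ j < k, ∀ x ∈ Set.Ioo (rr j) (rr (j + 1)), 0 < sign * (-1 : ℝ) ^ j * w x)

/-- The positively homogeneous piecewise linear function with slope `a` on the positive and
slope `b` on the negative half-line. -/
def slopes (a b x : ℝ) : ℝ := a * max x 0 + b * min x 0

lemma slopes_of_nonneg {a b x : ℝ} (hx : 0 ≤ x) : slopes a b x = a * x := by
  simp [slopes, hx]

lemma slopes_of_nonpos {a b x : ℝ} (hx : x ≤ 0) : slopes a b x = b * x := by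
  simp [slopes, hx]

@[simp] lemma slopes_zero (a b : ℝ) : slopes a b 0 = 0 := by simp [slopes]

lemma slopes_neg (a b x : ℝ) : slopes a b (-x) = -slopes b a x := by
  rcases le_total 0 x with h | h
  · rw [slopes_of_nonpos (by linarith), slopes_of_nonneg h]; ring
  · rw [slopes_of_nonneg (by linarith), slopes_of_nonpos h]; ring

lemma slopes_mul {a b c : ℝ} (hc : 0 ≤ c) (x : ℝ) : slopes a b (c * x) = c * slopes a b x := by
  rcases le_total 0 x with h | h
  · rw [slopes_of_nonneg (by positivity), slopes_of_nonneg h]; ring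
  · rw [slopes_of_nonpos (mul_nonpos_of_nonneg_of_nonpos hc h), slopes_of_nonpos h]; ring

lemma slopes_inv {a b : ℝ} (ha : 0 < a) (hb : 0 < b) (x : ℝ) :
    slopes a b (slopes a⁻¹ b⁻¹ x) = x := by
  rcases le_total 0 x with h | h
  · rw [slopes_of_nonneg h, slopes_of_nonneg (by positivity)]; field_simp
  · rw [slopes_of_nonpos h,
      slopes_of_nonpos (mul_nonpos_of_nonneg_of_nonpos (by positivity) h)]; field_simp

@[fun_prop] lemma continuous_slopes (a b : ℝ) : Continuous (slopes a b) := by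
  unfold slopes; fun_prop

lemma slopes_sub_mem {a b l L x y : ℝ} (hla : l ≤ a) (haL : a ≤ L) (hlb : l ≤ b) (hbL : b ≤ L)
    (hxy : x ≤ y) :
    l * (y - x) ≤ slopes a b y - slopes a b x ∧ slopes a b y - slopes a b x ≤ L * (y - x) := by
  rcases le_total 0 x with h | h <;> rcases le_total 0 y with h' | h'
  · rw [slopes_of_nonneg h, slopes_of_nonneg h']
    constructor <;> nlinarith
  · have : x = y := by linarith
    subst this; simp
  · rw [slopes_of_nonpos h, slopes_of_nonneg h']
    constructor <;> nlinarith
  · rw [slopes_of_nonpos h, slopes_of_nonpos h']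
    constructor <;> nlinarith

/-- The value of `u''` determined by `K(u'') + d K(q) + h = 0`, where `K = slopes a b`. -/
noncomputable def accel (a b d q h : ℝ) : ℝ := slopes a⁻¹ b⁻¹ (-(d * slopes a b q) - h)

lemma accel_neg (a b d q h : ℝ) : accel a b d (-q) (-h) = -accel b a d q h := by
  unfold accel
  rw [slopes_neg a b q,
    show -(d * -slopes b a q) - -h = -(-(d * slopes b a q) - h) by ring, slopes_neg]

lemma continuous_accel (a b d : ℝ) : Continuous fun x : ℝ × ℝ => accel a b d x.1 x.2 := by
  unfold accel; fun_prop

lemma slopes_accel {a b : ℝ} (ha : 0 < a) (hb : 0 < b) (d q h : ℝ) :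
    slopes a b (accel a b d q h) + d * slopes a b q = -h := by
  rw [accel, slopes_inv ha hb]; ring

lemma slopes_inv_sub_mem {a b l x y : ℝ} (hl : 0 < l) (hla : l ≤ a) (hlb : l ≤ b) (hxy : x ≤ y) :
    0 ≤ slopes a⁻¹ b⁻¹ y - slopes a⁻¹ b⁻¹ x ∧
      slopes a⁻¹ b⁻¹ y - slopes a⁻¹ b⁻¹ x ≤ l⁻¹ * (y - x) := by
  have ha : 0 < a := by linarith
  have hb : 0 < b := by linarith
  have := slopes_sub_mem (l := 0) (L := l⁻¹) (a := a⁻¹) (b := b⁻¹) (by positivity)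
    (inv_anti₀ hl hla) (by positivity) (inv_anti₀ hl hlb) hxy
  simpa using this

section

variable {a b d l L : ℝ} (hl : 0 < l) (hla : l ≤ a) (haL : a ≤ L) (hlb : l ≤ b) (hbL : b ≤ L)
  (hd : 0 ≤ d)

include hl hla haL hlb hbL hd

/-- `accel` is nonincreasing and Lipschitz in its slope argument. -/
lemma accel_sub_mem {q q' : ℝ} (hq : q ≤ q') (h : ℝ) :
    0 ≤ accel a b d q h - accel a b d q' h ∧
      accel a b d q h - accel a b d q' h ≤ L / l * d * (q' - q) := by
  have h1 := slopes_sub_mem hla haL hlb hbL hq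
  have h0 : 0 ≤ slopes a b q' - slopes a b q := by nlinarith
  have h2 := slopes_inv_sub_mem hl hla hlb
    (x := -(d * slopes a b q') - h) (y := -(d * slopes a b q) - h) (by nlinarith)
  refine ⟨h2.1, h2.2.trans ?_⟩
  have : d * (slopes a b q' - slopes a b q) ≤ d * (L * (q' - q)) := by gcongr; exact h1.2
  calc l⁻¹ * (-(d * slopes a b q) - h - (-(d * slopes a b q') - h))
      = l⁻¹ * (d * (slopes a b q' - slopes a b q)) := by ring
    _ ≤ l⁻¹ * (d * (L * (q' - q))) := by gcongr
    _ = _ := by ring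

lemma abs_accel_sub_le (q q' h : ℝ) :
    |accel a b d q h - accel a b d q' h| ≤ L / l * d * |q - q'| := by
  rcases le_total q q' with hq | hq
  · have := accel_sub_mem hl hla haL hlb hbL hd hq h
    rw [abs_of_nonneg this.1, abs_sub_comm, abs_of_nonneg (sub_nonneg.2 hq)]
    exact this.2
  · have := accel_sub_mem hl hla haL hlb hbL hd hq h
    rw [abs_sub_comm, abs_of_nonneg this.1, abs_of_nonneg (sub_nonneg.2 hq)]
    exact this.2

/-- After adding a large multiple of the slope, `accel` is Lipschitz with controlled constants. -/
lemma abs_accel_add_sub_le {N : ℝ} (hN : L / l * d ≤ N) (q q' h h' : ℝ) :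
    |(accel a b d q h + N * q) - (accel a b d q' h' + N * q')| ≤
      N * |q - q'| + l⁻¹ * |h - h'| := by
  have h1 : |(accel a b d q h + N * q) - (accel a b d q' h + N * q')| ≤ N * |q - q'| := by
    rcases le_total q q' with hq | hq
    · have := accel_sub_mem hl hla haL hlb hbL hd hq h
      have h3 : L / l * d * (q' - q) ≤ N * (q' - q) := by gcongr
      rw [abs_sub_comm q, abs_of_nonneg (sub_nonneg.2 hq), abs_le]
      constructor <;> nlinarith
    · have := accel_sub_mem hl hla haL hlb hbL hd hq h
      have h3 : L / l * d * (q - q') ≤ N * (q - q') := by gcongr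
      rw [abs_of_nonneg (sub_nonneg.2 hq), abs_le]
      constructor <;> nlinarith
  have h2 : |(accel a b d q' h + N * q') - (accel a b d q' h' + N * q')| ≤ l⁻¹ * |h - h'| := by
    rw [add_sub_add_right_eq_sub, accel, accel]
    rcases le_total h h' with hq | hq
    · have := slopes_inv_sub_mem hl hla hlb
        (x := -(d * slopes a b q') - h') (y := -(d * slopes a b q') - h) (by linarith)
      rw [abs_of_nonneg this.1, abs_sub_comm h, abs_of_nonneg (sub_nonneg.2 hq)]
      convert this.2 using 1; ring
    · have := slopes_inv_sub_mem hl hla hlb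
        (x := -(d * slopes a b q') - h) (y := -(d * slopes a b q') - h') (by linarith)
      rw [abs_sub_comm, abs_of_nonneg this.1, abs_of_nonneg (sub_nonneg.2 hq)]
      convert this.2 using 1; ring
  exact (abs_sub_le _ _ _).trans (add_le_add h1 h2)

/-- Along decreasing positive profiles, `u'' + ν u'/r` is bounded above by `-h / L`. -/
lemma accel_add_le {q h : ℝ} (hq : q < 0) (hh : 0 < h) :
    L / l * d * q + accel a b d q h ≤ -(h / L) := by
  have ha : 0 < a := by linarith
  have hb : 0 < b := by linarith
  have hL : 0 < L := by linarith
  rw [accel, slopes_of_nonpos hq.le]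
  rcases le_total 0 (-(d * (b * q)) - h) with hX | hX
  · rw [slopes_of_nonneg hX]
    have h1 : b / a * d ≤ L / l * d := by gcongr
    have h2 : h / L ≤ h / a := by gcongr
    have h3 : L / l * d * q ≤ b / a * d * q := mul_le_mul_of_nonpos_right h1 hq.le
    have h4 : a⁻¹ * (-(d * (b * q)) - h) = -(b / a * d * q) - h / a := by ring
    linarith
  · rw [slopes_of_nonpos hX]
    have h1 : 1 * d ≤ L / l * d := by
      gcongr; rw [le_div_iff₀ hl]; linarith
    have h2 : h / L ≤ h / b := by gcongr
    have h3 : L / l * d * q ≤ 1 * d * q := mul_le_mul_of_nonpos_right h1 hq.le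
    have h4 : b⁻¹ * (-(d * (b * q)) - h) = -(1 * d * q) - h / b := by field_simp
    linarith

end

lemma abs_integral_weight_le {g : ℝ → ℝ} {β D : ℝ} (hβ : 0 < β)
    (h : ∀ t, |g t| ≤ D * exp (β * t ^ 2)) (r : ℝ) :
    |∫ t in (0 : ℝ)..r, t * g t| ≤ D / (2 * β) * exp (β * r ^ 2) := by
  have hD : 0 ≤ D := by simpa using (abs_nonneg _).trans (h 0)
  have e1 : (∫ t in (0 : ℝ)..r, t * g t) = ∫ θ in (0 : ℝ)..1, r * (r * θ * g (r * θ)) := by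
    have := intervalIntegral.smul_integral_comp_mul_left (a := 0) (b := 1) (fun t => t * g t) r
    simp only [mul_zero, mul_one, smul_eq_mul] at this
    rw [← this, intervalIntegral.integral_const_mul]
  have e2 : (∫ θ in (0 : ℝ)..1, r ^ 2 * θ * (D * exp (β * (r * θ) ^ 2))) =
      D / (2 * β) * exp (β * r ^ 2) - D / (2 * β) := by
    have hd : ∀ θ ∈ uIcc (0 : ℝ) 1, HasDerivAt (fun θ => D / (2 * β) * exp (β * (r * θ) ^ 2))
        (r ^ 2 * θ * (D * exp (β * (r * θ) ^ 2))) θ := by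
      intro θ _
      have := ((((hasDerivAt_id θ).const_mul r).pow 2).const_mul β).exp.const_mul (D / (2 * β))
      refine this.congr_deriv ?_
      simp; field_simp
    rw [intervalIntegral.integral_eq_sub_of_hasDerivAt hd
      (Continuous.intervalIntegrable (by fun_prop) _ _)]
    simp
  have h3 : ‖∫ θ in (0 : ℝ)..1, r * (r * θ * g (r * θ))‖ ≤
      ∫ θ in (0 : ℝ)..1, r ^ 2 * θ * (D * exp (β * (r * θ) ^ 2)) := by
    refine intervalIntegral.norm_integral_le_of_norm_le zero_le_one ?_
      (Continuous.intervalIntegrable (by fun_prop) _ _)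
    refine Filter.Eventually.of_forall fun θ hθ => ?_
    have : r * (r * θ * g (r * θ)) = r ^ 2 * θ * g (r * θ) := by ring
    rw [this, norm_mul, Real.norm_of_nonneg (mul_nonneg (sq_nonneg r) hθ.1.le)]
    exact mul_le_mul_of_nonneg_left (h _) (mul_nonneg (sq_nonneg r) hθ.1.le)
  rw [e1, ← Real.norm_eq_abs]
  have : 0 ≤ D / (2 * β) := by positivity
  linarith

/-- The fixed-point problem equivalent to the singular radial initial value problem, in terms of
the slope `q r = u' r / r`. -/
lemma exists_slope_fixedPoint (N : ℕ) {S : ℝ → ℝ → ℝ} (hSc : Continuous fun x : ℝ × ℝ => S x.1 x.2)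
    {C : ℝ} (hC : 0 ≤ C)
    (hS : ∀ q q' u u', |S q u - S q' u'| ≤ N * |q - q'| + C * |u - u'|) (u0 : ℝ) :
    ∃ q u : ℝ → ℝ, Continuous q ∧ (∀ r, u r = u0 + ∫ t in (0 : ℝ)..r, t * q t) ∧
      ∀ r, q r = ∫ θ in (0 : ℝ)..1, θ ^ N * S (q (r * θ)) (u (r * θ)) := by
  set β : ℝ := C + 1 with hβdef
  have hβ : 0 < β := by positivity
  set U : (ℝ → ℝ) → ℝ → ℝ := fun q r => u0 + ∫ t in (0 : ℝ)..r, t * q t with hU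
  set T : (ℝ → ℝ) → ℝ → ℝ := fun q r => ∫ θ in (0 : ℝ)..1, θ ^ N * S (q (r * θ)) (U q (r * θ))
    with hT
  have hUc : ∀ q, Continuous q → Continuous (U q) := by
    intro q hq
    have : Continuous fun r => ∫ t in (0 : ℝ)..r, t * q t :=
      intervalIntegral.continuous_primitive
        (fun a b => Continuous.intervalIntegrable (by fun_prop) a b) 0
    exact continuous_const.add this
  have hic : ∀ q, Continuous q → Continuous fun x : ℝ × ℝ =>
      x.2 ^ N * S (q (x.1 * x.2)) (U q (x.1 * x.2)) := by
    intro q hq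
    have h1 : Continuous fun x : ℝ × ℝ => (q (x.1 * x.2), U q (x.1 * x.2)) := by
      have := hUc q hq
      fun_prop
    exact (continuous_snd.pow N).mul (hSc.comp h1)
  have hii : ∀ q, Continuous q → ∀ r, IntervalIntegrable
      (fun θ => θ ^ N * S (q (r * θ)) (U q (r * θ))) MeasureTheory.volume 0 1 := fun q hq r =>
    ((hic q hq).comp (Continuous.prodMk_right r)).intervalIntegrable _ _
  have hTc : ∀ q, Continuous q → Continuous (T q) := fun q hq =>
    intervalIntegral.continuous_parametric_intervalIntegral_of_continuous' (hic q hq) 0 1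
  set κ : ℝ := (N + 1 / 2) / (N + 1) with hκ
  have hκ0 : 0 ≤ κ := by positivity
  have hκ1 : κ < 1 := by rw [hκ, div_lt_one (by positivity)]; linarith
  have key : ∀ q q', Continuous q → Continuous q' → ∀ D : ℝ,
      (∀ t, |q t - q' t| ≤ D * exp (β * t ^ 2)) →
      ∀ r, |T q r - T q' r| ≤ κ * D * exp (β * r ^ 2) := by
    intro q q' hq hq' D hD r
    have hD0 : 0 ≤ D := by simpa using (abs_nonneg _).trans (hD 0)
    have hUd : ∀ r, |U q r - U q' r| ≤ D / (2 * β) * exp (β * r ^ 2) := by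
      intro r
      have : U q r - U q' r = ∫ t in (0 : ℝ)..r, t * (q t - q' t) := by
        simp only [hU, add_sub_add_left_eq_sub, mul_sub]
        rw [intervalIntegral.integral_sub] <;>
          exact Continuous.intervalIntegrable (by fun_prop) _ _
      rw [this]
      exact abs_integral_weight_le hβ hD r
    have e1 : T q r - T q' r = ∫ θ in (0 : ℝ)..1, (θ ^ N * S (q (r * θ)) (U q (r * θ)) -
        θ ^ N * S (q' (r * θ)) (U q' (r * θ))) :=
      (intervalIntegral.integral_sub (hii q hq r) (hii q' hq' r)).symm
    have e2 : (∫ θ in (0 : ℝ)..1, θ ^ N * ((N + 1 / 2) * D * exp (β * r ^ 2))) =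
        κ * D * exp (β * r ^ 2) := by
      rw [intervalIntegral.integral_mul_const, integral_pow]
      simp [hκ]; ring
    rw [e1, ← Real.norm_eq_abs, ← e2]
    refine intervalIntegral.norm_integral_le_of_norm_le zero_le_one ?_
      (Continuous.intervalIntegrable (by fun_prop) _ _)
    refine Filter.Eventually.of_forall fun θ hθ => ?_
    rw [← mul_sub, norm_mul, Real.norm_of_nonneg (pow_nonneg hθ.1.le N)]
    refine mul_le_mul_of_nonneg_left ?_ (pow_nonneg hθ.1.le N)
    have hexp : exp (β * (r * θ) ^ 2) ≤ exp (β * r ^ 2) := by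
      refine exp_le_exp.2 (mul_le_mul_of_nonneg_left ?_ hβ.le)
      rw [mul_pow]
      exact mul_le_of_le_one_right (sq_nonneg r) (pow_le_one₀ hθ.1.le hθ.2)
    have hCβ : C * (D / (2 * β)) ≤ 1 / 2 * D := by
      have : C / β ≤ 1 := by rw [div_le_one hβ]; linarith
      calc C * (D / (2 * β)) = (C / β) * (1 / 2 * D) := by field_simp
        _ ≤ 1 * (1 / 2 * D) := by gcongr
        _ = _ := one_mul _
    calc ‖S (q (r * θ)) (U q (r * θ)) - S (q' (r * θ)) (U q' (r * θ))‖
        ≤ N * |q (r * θ) - q' (r * θ)| + C * |U q (r * θ) - U q' (r * θ)| := hS _ _ _ _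
      _ ≤ N * (D * exp (β * (r * θ) ^ 2)) + C * (D / (2 * β) * exp (β * (r * θ) ^ 2)) := by
          gcongr
          · exact hD _
          · exact hUd _
      _ = (N * D + C * (D / (2 * β))) * exp (β * (r * θ) ^ 2) := by ring
      _ ≤ (N * D + 1 / 2 * D) * exp (β * r ^ 2) := by gcongr
      _ = _ := by ring
  have hT0 : ∀ r, |T 0 r| ≤ |S 0 u0| := by
    intro r
    have : T 0 r = (1 / (N + 1)) * S 0 u0 := by
      simp [hT, hU, integral_pow]
    rw [this, abs_mul, abs_of_nonneg (by positivity)]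
    refine mul_le_of_le_one_left (abs_nonneg _) ?_
    rw [div_le_one (by positivity)]
    linarith [(Nat.cast_nonneg N : (0 : ℝ) ≤ N)]
  let E : BoundedContinuousFunction ℝ ℝ → ℝ → ℝ := fun Q r => exp (β * r ^ 2) * Q r
  have hEc : ∀ Q, Continuous (E Q) := fun Q => by
    have := Q.continuous
    fun_prop
  have hEd : ∀ (Q Q' : BoundedContinuousFunction ℝ ℝ) t,
      |E Q t - E Q' t| ≤ dist Q Q' * exp (β * t ^ 2) := by
    intro Q Q' t
    rw [← mul_sub, abs_mul, abs_of_pos (exp_pos _), mul_comm]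
    exact mul_le_mul_of_nonneg_right
      ((Real.dist_eq _ _).symm.trans_le (Q.dist_coe_le_dist t)) (exp_pos _).le
  have hE0 : E 0 = 0 := by funext r; simp [E]
  have hbd : ∀ (Q : BoundedContinuousFunction ℝ ℝ) r,
      ‖exp (-(β * r ^ 2)) * T (E Q) r‖ ≤ κ * dist Q 0 + |S 0 u0| := by
    intro Q r
    have h1 := key (E Q) (E 0) (hEc Q) (hEc 0) _ (hEd Q 0) r
    rw [hE0] at h1
    have h2 : exp (-(β * r ^ 2)) ≤ 1 := exp_le_one_iff.2 (by
      have : 0 ≤ β * r ^ 2 := by positivity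
      linarith)
    have h3 : |T (E Q) r| ≤ κ * dist Q 0 * exp (β * r ^ 2) + |S 0 u0| := by
      have := abs_sub_abs_le_abs_sub (T (E Q) r) (T 0 r)
      linarith [hT0 r]
    rw [norm_mul, Real.norm_of_nonneg (exp_pos _).le, Real.norm_eq_abs]
    calc exp (-(β * r ^ 2)) * |T (E Q) r|
        ≤ exp (-(β * r ^ 2)) * (κ * dist Q 0 * exp (β * r ^ 2) + |S 0 u0|) := by gcongr
      _ = κ * dist Q 0 * (exp (-(β * r ^ 2)) * exp (β * r ^ 2)) +
          exp (-(β * r ^ 2)) * |S 0 u0| := by ring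
      _ ≤ κ * dist Q 0 + |S 0 u0| := by
          rw [← exp_add, neg_add_cancel, exp_zero, mul_one]
          gcongr
          exact mul_le_of_le_one_left (abs_nonneg _) h2
  let Ψ : BoundedContinuousFunction ℝ ℝ → BoundedContinuousFunction ℝ ℝ := fun Q =>
    BoundedContinuousFunction.ofNormedAddCommGroup (fun r => exp (-(β * r ^ 2)) * T (E Q) r)
      (by have := hTc _ (hEc Q); fun_prop) _ (hbd Q)
  have hΨ : ContractingWith ⟨κ, hκ0⟩ Ψ := by
    refine ⟨by exact_mod_cast hκ1, LipschitzWith.of_dist_le_mul fun Q Q' => ?_⟩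
    refine (BoundedContinuousFunction.dist_le (by positivity)).2 fun r => ?_
    change |exp (-(β * r ^ 2)) * T (E Q) r - exp (-(β * r ^ 2)) * T (E Q') r| ≤ κ * dist Q Q'
    rw [← mul_sub, abs_mul, abs_of_pos (exp_pos _)]
    calc _ ≤ exp (-(β * r ^ 2)) * (κ * dist Q Q' * exp (β * r ^ 2)) := by
            gcongr; exact key _ _ (hEc Q) (hEc Q') _ (hEd Q Q') r
      _ = κ * dist Q Q' * (exp (-(β * r ^ 2)) * exp (β * r ^ 2)) := by ring
      _ = _ := by rw [← exp_add, neg_add_cancel, exp_zero, mul_one]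
  obtain ⟨Q, hQ⟩ : ∃ Q, Ψ Q = Q := ⟨_, hΨ.fixedPoint_isFixedPt⟩
  refine ⟨E Q, U (E Q), hEc Q, fun r => rfl, fun r => ?_⟩
  have h1 : exp (-(β * r ^ 2)) * T (E Q) r = Q r := congrArg (fun F => F r) hQ
  change exp (β * r ^ 2) * Q r = T (E Q) r
  rw [← h1, ← mul_assoc, ← exp_add, add_neg_cancel, exp_zero, one_mul]

lemma exists_radial_solution {a b d l L : ℝ} (hl : 0 < l) (hla : l ≤ a) (haL : a ≤ L)
    (hlb : l ≤ b) (hbL : b ≤ L) (hd : 0 ≤ d) {f : ℝ → ℝ} {C : ℝ} (hC : 0 ≤ C)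
    (hf : ∀ x y, |f x - f y| ≤ C * |x - y|) (hfc : Continuous f) (u0 : ℝ) :
    ∃ u v : ℝ → ℝ, (∀ r, HasDerivAt u (v r) r) ∧ Continuous v ∧ v 0 = 0 ∧ u 0 = u0 ∧
      ∀ r, 0 < r → HasDerivAt v (accel a b d (v r / r) (f (u r))) r := by
  obtain ⟨N, hN⟩ := exists_nat_ge (L / l * d)
  set S : ℝ → ℝ → ℝ := fun q u => accel a b d q (f u) + N * q with hSdef
  have hSc : Continuous fun x : ℝ × ℝ => S x.1 x.2 := by
    have h1 : Continuous fun x : ℝ × ℝ => accel a b d x.1 (f x.2) :=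
      (continuous_accel a b d).comp (f := fun x : ℝ × ℝ => (x.1, f x.2)) (by fun_prop)
    exact h1.add (by fun_prop)
  have hS : ∀ q q' u u', |S q u - S q' u'| ≤ N * |q - q'| + l⁻¹ * C * |u - u'| := by
    intro q q' u u'
    refine (abs_accel_add_sub_le hl hla haL hlb hbL hd hN q q' (f u) (f u')).trans ?_
    rw [mul_assoc]
    gcongr
    exact hf u u'
  obtain ⟨q, u, hq, hu, hqS⟩ := exists_slope_fixedPoint N hSc (by positivity) hS u0
  have hud : ∀ r, HasDerivAt u (r * q r) r := by
    intro r
    have h1 : Continuous fun t => t * q t := by fun_prop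
    have := (h1.integral_hasStrictDerivAt 0 r).hasDerivAt.const_add u0
    exact this.congr_of_eventuallyEq (Filter.Eventually.of_forall hu)
  have huc : Continuous u := continuous_iff_continuousAt.2 fun r => (hud r).continuousAt
  set g : ℝ → ℝ := fun s => s ^ N * S (q s) (u s) with hg
  have hgc : Continuous g := (continuous_id.pow N).mul
    (hSc.comp (f := fun s => (q s, u s)) (by fun_prop))
  have hJ : ∀ r, r ^ (N + 1) * q r = ∫ s in (0 : ℝ)..r, g s := by
    intro r
    have := intervalIntegral.smul_integral_comp_mul_left (a := 0) (b := 1) g r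
    simp only [mul_zero, mul_one, smul_eq_mul, hg, mul_pow, mul_assoc] at this
    rw [intervalIntegral.integral_const_mul, ← hqS] at this
    rw [← this]; ring
  refine ⟨u, fun r => r * q r, hud, by fun_prop, by simp, by simp [hu], fun r hr => ?_⟩
  have h1 := (hgc.integral_hasStrictDerivAt 0 r).hasDerivAt.div (hasDerivAt_pow N r)
    (pow_pos hr N).ne'
  have h2 : (fun s => s * q s) =ᶠ[nhds r] fun s => (∫ t in (0 : ℝ)..s, g t) / s ^ N := by
    filter_upwards [lt_mem_nhds hr] with s hs
    rw [← hJ, pow_succ]; field_simp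
  refine (h1.congr_of_eventuallyEq h2).congr_deriv ?_
  rw [← hJ, mul_div_cancel_left₀ _ hr.ne', hg]
  rcases N with _ | N
  · simp [hSdef]
  · simp only [hSdef, Nat.add_sub_cancel]
    field_simp
    ring

lemma le_of_hasDerivAt_nonneg {g g' : ℝ → ℝ} {x y : ℝ} (hxy : x ≤ y)
    (hg : ∀ r ∈ Icc x y, HasDerivAt g (g' r) r) (h : ∀ r ∈ Icc x y, 0 ≤ g' r) : g x ≤ g y := by
  refine monotoneOn_of_deriv_nonneg (convex_Icc x y)
    (fun r hr => (hg r hr).continuousAt.continuousWithinAt)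
    (fun r hr => (hg r (interior_subset hr)).differentiableAt.differentiableWithinAt)
    (fun r hr => ?_) (left_mem_Icc.2 hxy) (right_mem_Icc.2 hxy) hxy
  rw [(hg r (interior_subset hr)).deriv]
  exact h r (interior_subset hr)

open Filter Topology in
lemma exists_first_zero {g : ℝ → ℝ} {x z : ℝ} (hxz : x < z) (hg : ContinuousOn g (Icc x z))
    (hz : g z ≤ 0) (hx : ∀ᶠ r in 𝓝[>] x, 0 < g r) :
    ∃ y, x < y ∧ y ≤ z ∧ g y = 0 ∧ ∀ r ∈ Ioo x y, 0 < g r := by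
  obtain ⟨e, he, hpos⟩ := (mem_nhdsGT_iff_exists_Ioo_subset' hxz).1 hx
  have hxe : x < e := he
  have hez : e ≤ z := by
    by_contra! h
    have : 0 < g z := hpos ⟨hxz, h⟩
    linarith
  obtain ⟨m, hxm, hme⟩ := exists_between hxe
  set Z := Icc m z ∩ g ⁻¹' Iic 0 with hZ
  have hZc : IsClosed Z := (hg.mono (Icc_subset_Icc_left hxm.le)).preimage_isClosed_of_isClosed
    isClosed_Icc isClosed_Iic
  have hZn : Z.Nonempty := ⟨z, ⟨by linarith, le_rfl⟩, hz⟩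
  have hZb : BddBelow Z := ⟨m, fun r hr => hr.1.1⟩
  have hy : sInf Z ∈ Z := hZc.csInf_mem hZn hZb
  have hbefore : ∀ r ∈ Ioo x (sInf Z), 0 < g r := by
    intro r hr
    by_contra! h
    rcases lt_or_ge r e with h' | h'
    · have : 0 < g r := hpos ⟨hr.1, h'⟩
      linarith
    · exact (csInf_le hZb ⟨⟨by linarith, hr.2.le.trans hy.1.2⟩, h⟩).not_gt hr.2
  have hxy : x < sInf Z := hxm.trans_le hy.1.1
  refine ⟨sInf Z, hxy, hy.1.2, le_antisymm hy.2 ?_, hbefore⟩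
  have hcl : sInf Z ∈ closure (Ioo x (sInf Z)) := by
    rw [closure_Ioo hxy.ne]; exact right_mem_Icc.2 hxy.le
  have := mem_closure_iff_nhdsWithin_neBot.1 hcl
  have ht : Tendsto g (𝓝[Ioo x (sInf Z)] (sInf Z)) (𝓝 (g (sInf Z))) :=
    (hg (sInf Z) ⟨hxy.le, hy.1.2⟩).mono
      (Ioo_subset_Icc_self.trans (Icc_subset_Icc_right hy.1.2))
  refine ge_of_tendsto ht ?_
  filter_upwards [self_mem_nhdsWithin] with r hr using (hbefore r hr).le

open Filter Topology in
lemma eventually_neg_right {g : ℝ → ℝ} {g' y : ℝ} (hg : HasDerivAt g g' y) (hy : g y = 0)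
    (h : g' < 0) : ∀ᶠ r in 𝓝[>] y, g r < 0 := by
  have := (hasDerivAt_iff_tendsto_slope.1 hg).eventually_lt_const h
  filter_upwards [nhdsWithin_mono y (fun r hr => ne_of_gt hr) this, self_mem_nhdsWithin]
    with r hr hry
  rw [slope_def_field, hy, sub_zero, div_neg_iff] at hr
  have : y < r := hry
  rcases hr with hr | hr <;> linarith

open Filter Topology in
lemma deriv_nonpos_of_pos_left {g : ℝ → ℝ} {g' x y : ℝ} (hxy : x < y) (hg : HasDerivAt g g' y)
    (hy : g y = 0) (h : ∀ r ∈ Ioo x y, 0 < g r) : g' ≤ 0 := by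
  by_contra! hpos
  have h1 : ∀ᶠ r in 𝓝[<] y, 0 < slope g y r := nhdsWithin_mono y (fun r hr => ne_of_lt hr)
    ((hasDerivAt_iff_tendsto_slope.1 hg).eventually_const_lt hpos)
  obtain ⟨r, hr, hrI⟩ := (h1.and (Ioo_mem_nhdsLT hxy)).exists
  rw [slope_def_field, hy, sub_zero] at hr
  have := h r hrI
  have h3 : g r / (r - y) < 0 := div_neg_of_pos_of_neg this (by linarith [hrI.2])
  linarith

/-- Radial Liouville property: a decreasing positive supersolution of `-Δw = w ^ p` in dimension
`ν + 1` cannot exist on a half-line when `p` does not exceed the Serrin exponent. -/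
lemma no_decreasing_supersolution {L p ν r₁ : ℝ} (hL : 0 < L) (hp : 1 < p)
    (hsub : ν = 1 ∨ 1 < ν ∧ p * (ν - 1) ≤ ν + 1) (hr₁ : 1 ≤ r₁) {u v v' : ℝ → ℝ}
    (hu : ∀ r ≥ r₁, HasDerivAt u (v r) r) (hv : ∀ r ≥ r₁, HasDerivAt v (v' r) r)
    (hpos : ∀ r ≥ r₁, 0 < u r) (hneg : ∀ r ≥ r₁, v r < 0)
    (hsuper : ∀ r ≥ r₁, ν * (v r / r) + v' r ≤ -(u r ^ p / L)) : False := by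
  set w : ℝ → ℝ := fun r => -(r ^ ν * v r) with hw
  have hwd : ∀ r ≥ r₁, HasDerivAt w (-(r ^ ν * (ν * (v r / r) + v' r))) r := by
    intro r hr
    have hr0 : 0 < r := by linarith
    refine ((Real.hasDerivAt_rpow_const (Or.inl hr0.ne')).mul (hv r hr)).neg.congr_deriv ?_
    rw [Real.rpow_sub_one hr0.ne']
    ring
  have hwd' : ∀ r ≥ r₁, r ^ ν * u r ^ p / L ≤ -(r ^ ν * (ν * (v r / r) + v' r)) := by
    intro r hr
    have hr0 : 0 < r := by linarith
    have := mul_le_mul_of_nonneg_left (hsuper r hr) (rpow_nonneg hr0.le ν)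
    have h2 : r ^ ν * u r ^ p / L = -(r ^ ν * -(u r ^ p / L)) := by ring
    linarith
  have hwmono : ∀ x y, r₁ ≤ x → x ≤ y → w x ≤ w y := by
    intro x y hx hxy
    refine le_of_hasDerivAt_nonneg hxy (fun r hr => hwd r (hx.trans hr.1)) fun r hr => ?_
    have hr1 := hx.trans hr.1
    have h1 := hpos r hr1
    have hr0 : 0 < r := by linarith
    exact (by positivity : 0 ≤ r ^ ν * u r ^ p / L).trans (hwd' r hr1)
  have hc0 : 0 < w r₁ := by
    have hr0 : 0 < r₁ := by linarith
    have := mul_neg_of_pos_of_neg (rpow_pos_of_pos hr0 ν) (hneg r₁ le_rfl)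
    simp only [hw]; linarith
  rcases hsub with rfl | ⟨hν, hpν⟩
  · obtain ⟨y, hy1, hy2⟩ := ((Real.tendsto_log_atTop.eventually_gt_atTop
      ((u r₁ + w r₁ * log r₁) / w r₁)).and (Filter.eventually_ge_atTop r₁)).exists
    rw [div_lt_iff₀ hc0] at hy1
    have := le_of_hasDerivAt_nonneg (g := fun r => -u r - w r₁ * log r)
      (g' := fun r => -v r - w r₁ * r⁻¹) hy2
      (fun r hr => (hu r hr.1).neg.sub
        ((Real.hasDerivAt_log (by linarith [hr.1])).const_mul _)) (by
        intro r hr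
        have hr0 : 0 < r := by linarith [hr.1]
        have := hwmono r₁ r le_rfl hr.1
        have h2 : w r = r * -v r := by simp [hw]
        have h3 : w r₁ * r⁻¹ ≤ -v r := by
          rw [mul_inv_le_iff₀ hr0, mul_comm, ← h2]; exact this
        linarith)
    have := hpos y hy2
    nlinarith
  have hν1 : 0 < ν - 1 := by linarith
  have lower : ∀ A ρ, 0 ≤ A → r₁ ≤ ρ → A ≤ w ρ → A / (ν - 1) * ρ ^ (-(ν - 1)) ≤ u ρ := by
    intro A ρ hA hρ hAw
    have hanti : ∀ s ≥ ρ, A / (ν - 1) * ρ ^ (-(ν - 1)) - A / (ν - 1) * s ^ (-(ν - 1)) ≤ u ρ := by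
      intro s hs
      have := le_of_hasDerivAt_nonneg
        (g := fun r => A / (ν - 1) * r ^ (-(ν - 1)) - u r)
        (g' := fun r => A / (ν - 1) * (-(ν - 1) * r ^ (-(ν - 1) - 1)) - v r) hs
        (fun r hr => ((Real.hasDerivAt_rpow_const
          (Or.inl (by linarith [hr.1]))).const_mul _).sub (hu r (hρ.trans hr.1))) (by
          intro r hr
          have hr0 : 0 < r := by linarith [hr.1]
          have h1 := hAw.trans (hwmono ρ r hρ hr.1)
          have h2 : A / (ν - 1) * (-(ν - 1) * r ^ (-(ν - 1) - 1)) = -(A * (r ^ ν)⁻¹) := by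
            rw [← Real.rpow_neg hr0.le]
            have : -(ν - 1) - 1 = -ν := by ring
            rw [this]; field_simp
          have h3 : A * (r ^ ν)⁻¹ ≤ -v r := by
            rw [mul_inv_le_iff₀ (rpow_pos_of_pos hr0 ν)]
            simp only [hw] at h1; linarith
          rw [h2]; linarith)
      have := hpos s (hρ.trans hs)
      linarith
    have hlim : Filter.Tendsto
        (fun s : ℝ => A / (ν - 1) * ρ ^ (-(ν - 1)) - A / (ν - 1) * s ^ (-(ν - 1)))
        Filter.atTop (nhds (A / (ν - 1) * ρ ^ (-(ν - 1)) - A / (ν - 1) * 0)) :=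
      tendsto_const_nhds.sub ((tendsto_rpow_neg_atTop hν1).const_mul _)
    rw [mul_zero, sub_zero] at hlim
    exact le_of_tendsto hlim ((Filter.eventually_ge_atTop ρ).mono hanti)
  set c₁ : ℝ := (w r₁ / (ν - 1)) ^ p / L with hc₁
  have hc₁0 : 0 < c₁ := by positivity
  have wlog : ∀ r ≥ r₁, w r₁ - c₁ * log r₁ ≤ w r - c₁ * log r := by
    intro r hr
    refine le_of_hasDerivAt_nonneg (g := fun r => w r - c₁ * log r) hr (fun s hs => (hwd s hs.1).sub
      ((Real.hasDerivAt_log (by linarith [hs.1])).const_mul _)) fun s hs => ?_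
    have hs0 : 0 < s := by linarith [hs.1]
    have hs1 : 1 ≤ s := by linarith [hs.1]
    have h1 := lower (w r₁) s hc0.le hs.1 (hwmono r₁ s le_rfl hs.1)
    have h2 : (w r₁ / (ν - 1)) ^ p * s ^ (-(ν - 1) * p) ≤ u s ^ p := by
      rw [Real.rpow_mul hs0.le, ← Real.mul_rpow (by positivity) (by positivity)]
      exact Real.rpow_le_rpow (by positivity) h1 (by linarith)
    have h3 : s⁻¹ ≤ s ^ ν * s ^ (-(ν - 1) * p) := by
      rw [← Real.rpow_add hs0, ← Real.rpow_neg_one]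
      exact Real.rpow_le_rpow_of_exponent_le hs1 (by nlinarith)
    have h4 : c₁ * s⁻¹ ≤ s ^ ν * u s ^ p / L := by
      calc c₁ * s⁻¹ ≤ c₁ * (s ^ ν * s ^ (-(ν - 1) * p)) := by gcongr
        _ = s ^ ν * ((w r₁ / (ν - 1)) ^ p * s ^ (-(ν - 1) * p)) / L := by rw [hc₁]; ring
        _ ≤ _ := by gcongr
    linarith [hwd' s hs.1]
  have hwtop : Filter.Tendsto w Filter.atTop Filter.atTop := by
    refine Filter.tendsto_atTop_mono' _ ((Filter.eventually_ge_atTop r₁).mono fun r hr => ?_)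
      (Filter.tendsto_atTop_add_const_right _ (w r₁ - c₁ * log r₁)
        (Real.tendsto_log_atTop.const_mul_atTop hc₁0))
    linarith [wlog r hr]
  set c : ℝ := 1 / (2 * L * (ν + 1)) with hc
  have hc0' : 0 < c := by positivity
  have upper : ∀ r ≥ 2 * r₁, c * r * u r ^ p ≤ -v r := by
    intro r hr
    have hr0 : 0 < r := by linarith
    have hr1 : r₁ ≤ r := by linarith
    have hur := hpos r hr1
    set B : ℝ := u r ^ p / L / (ν + 1) with hB
    have hB0 : 0 < B := by positivity
    have h1 := le_of_hasDerivAt_nonneg (g := fun s => w s - B * s ^ (ν + 1)) hr1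
      (fun s hs => (hwd s hs.1).sub
        ((Real.hasDerivAt_rpow_const (Or.inl (by linarith [hs.1]))).const_mul _)) (by
        intro s hs
        have hs0 : 0 < s := by linarith [hs.1]
        have h2 : u r ≤ u s := by
          have := le_of_hasDerivAt_nonneg (g := fun t => -u t) (g' := fun t => -v t) hs.2
            (fun t ht => (hu t (hs.1.trans ht.1)).neg)
            (fun t ht => by linarith [hneg t (hs.1.trans ht.1)])
          linarith
        have h3 : u r ^ p ≤ u s ^ p := Real.rpow_le_rpow hur.le h2 (by linarith)
        have h4 : B * ((ν + 1) * s ^ (ν + 1 - 1)) = s ^ ν * u r ^ p / L := by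
          rw [hB, add_sub_cancel_right]; field_simp
        have h5 : s ^ ν * u r ^ p / L ≤ s ^ ν * u s ^ p / L := by gcongr
        rw [h4]
        linarith [hwd' s hs.1])
    have h2 : 2 * r₁ ^ (ν + 1) ≤ r ^ (ν + 1) := by
      calc 2 * r₁ ^ (ν + 1) ≤ 2 ^ (ν + 1) * r₁ ^ (ν + 1) := by
            gcongr
            simpa using Real.rpow_le_rpow_of_exponent_le (x := 2) (y := 1) (z := ν + 1)
              (by norm_num) (by linarith)
        _ = (2 * r₁) ^ (ν + 1) := (Real.mul_rpow (by norm_num) (by linarith)).symm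
        _ ≤ _ := Real.rpow_le_rpow (by linarith) hr (by linarith)
    have h3 : B * (r ^ (ν + 1) / 2) ≤ w r := by
      have : B * (2 * r₁ ^ (ν + 1)) ≤ B * r ^ (ν + 1) := by gcongr
      linarith
    have h4 : B * (r ^ (ν + 1) / 2) = r ^ ν * (c * r * u r ^ p) := by
      rw [Real.rpow_add_one hr0.ne', hB, hc]; field_simp
    have h5 : w r = r ^ ν * (-v r) := by simp only [hw]; ring
    rw [h4, h5] at h3
    exact le_of_mul_le_mul_left h3 (rpow_pos_of_pos hr0 ν)
  set c' : ℝ := c * (p - 1) / 2 with hc'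
  have hc'0 : 0 < c' := by
    have : 0 < p - 1 := by linarith
    positivity
  have ugrow : ∀ r ≥ 4 * r₁, c' / 2 * r ^ 2 ≤ u r ^ (1 - p) := by
    intro r hr
    have hr2 : 2 * r₁ ≤ r := by linarith
    have h1 := le_of_hasDerivAt_nonneg (g := fun s => u s ^ (1 - p) - c' * s ^ 2) hr2
      (fun s hs => ((hu s (by linarith [hs.1])).rpow_const
        (Or.inl (hpos s (by linarith [hs.1])).ne')).sub ((hasDerivAt_pow 2 s).const_mul c')) (by
        intro s hs
        have hs0 : 0 < s := by linarith [hs.1]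
        have hus := hpos s (by linarith [hs.1])
        have h2 := upper s hs.1
        have h3 : u s ^ (1 - p - 1) * u s ^ p = 1 := by
          rw [← Real.rpow_add hus]; simp
        have h4 : c * s ≤ u s ^ (1 - p - 1) * -v s := by
          calc c * s = u s ^ (1 - p - 1) * (c * s * u s ^ p) := by
                rw [show u s ^ (1 - p - 1) * (c * s * u s ^ p) =
                  c * s * (u s ^ (1 - p - 1) * u s ^ p) by ring, h3, mul_one]
            _ ≤ _ := by gcongr
        have h5 : (p - 1) * (c * s) ≤ (p - 1) * (u s ^ (1 - p - 1) * -v s) :=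
          mul_le_mul_of_nonneg_left h4 (by linarith)
        have h6 : c' * ((2 : ℕ) * s ^ (2 - 1)) = (p - 1) * (c * s) := by
          rw [hc']; norm_num; ring
        rw [h6]
        linarith)
    have h2 : 0 < u (2 * r₁) ^ (1 - p) := rpow_pos_of_pos (hpos _ (by linarith)) _
    have h3 : (2 * r₁) ^ 2 ≤ r ^ 2 / 2 := by nlinarith
    have h4 : c' * (2 * r₁) ^ 2 ≤ c' * (r ^ 2 / 2) := by gcongr
    linarith
  have hB : ∀ᶠ B : ℝ in Filter.atTop, B ^ (-(p - 1)) < c' / 2 :=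
    (tendsto_rpow_neg_atTop (by linarith : 0 < p - 1)).eventually_lt_const (by positivity)
  obtain ⟨B, hB1, hB0⟩ := (hB.and (Filter.eventually_gt_atTop 0)).exists
  obtain ⟨r, hr1, hr2⟩ := ((hwtop.eventually_ge_atTop ((ν - 1) * B)).and
    (Filter.eventually_ge_atTop (4 * r₁))).exists
  have hr0 : 0 < r := by linarith
  have h1 := lower _ r (by positivity) (by linarith) hr1
  rw [mul_div_cancel_left₀ _ hν1.ne'] at h1
  have h2 : u r ^ (1 - p) ≤ (B * r ^ (-(ν - 1))) ^ (1 - p) :=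
    Real.rpow_le_rpow_of_nonpos (by positivity) h1 (by linarith)
  rw [Real.mul_rpow hB0.le (by positivity), ← Real.rpow_mul hr0.le] at h2
  have h3 : r ^ (-(ν - 1) * (1 - p)) ≤ r ^ 2 := by
    rw [← Real.rpow_natCast r 2]
    exact Real.rpow_le_rpow_of_exponent_le (by linarith) (by push_cast; nlinarith)
  have h4 : B ^ (1 - p) < c' / 2 := by rw [← neg_sub]; exact hB1
  have h5 := ugrow r hr2
  have h6 : B ^ (1 - p) * r ^ (-(ν - 1) * (1 - p)) ≤ B ^ (1 - p) * r ^ 2 := by gcongr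
  have h7 : B ^ (1 - p) * r ^ 2 < c' / 2 * r ^ 2 := by gcongr
  linarith

open Filter Topology in
lemma not_eventually_pos {a b d l L p : ℝ} (hl : 0 < l) (hla : l ≤ a) (haL : a ≤ L)
    (hlb : l ≤ b) (hbL : b ≤ L) (hd : 0 ≤ d) (hp : 1 < p)
    (hsub : L / l * d = 1 ∨ 1 < L / l * d ∧ p * (L / l * d - 1) ≤ L / l * d + 1)
    {u v : ℝ → ℝ} {r₀ : ℝ} (hu : ∀ r > r₀, HasDerivAt u (v r) r)
    (hv : ∀ r > r₀, HasDerivAt v (accel a b d (v r / r) (u r ^ p)) r)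
    (hpos : ∀ r > r₀, 0 < u r) : False := by
  have hb : 0 < b := by linarith
  have hL : 0 < L := by linarith
  set ρ : ℝ := max r₀ 0 + 1 with hρ
  have hρ0 : 1 ≤ ρ := by have := le_max_right r₀ 0; linarith
  have hρ1 : r₀ < ρ := by have := le_max_left r₀ 0; linarith
  have hacc : ∀ h, 0 ≤ h → accel a b d 0 h = -(h / b) := by
    intro h hh
    rw [accel, slopes_zero, slopes_of_nonpos (by linarith)]
    ring
  obtain ⟨r₁, hr₁, hvr₁⟩ : ∃ r₁ ≥ ρ, v r₁ < 0 := by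
    by_contra! hv0
    set c : ℝ := u ρ ^ p / b with hc
    have hc0 : 0 < c := by
      have := hpos ρ hρ1
      positivity
    set z : ℝ := ρ + (v ρ + 1) / c with hz
    have hρz : ρ ≤ z := by
      have : 0 ≤ (v ρ + 1) / c := div_nonneg (by linarith [hv0 ρ le_rfl]) hc0.le
      linarith
    have h1 := le_of_hasDerivAt_nonneg (g := fun r => -v r - c * r)
      (g' := fun r => -accel a b d (v r / r) (u r ^ p) - c * 1) hρz
      (fun r hr => (hv r (by linarith [hr.1])).neg.sub ((hasDerivAt_id r).const_mul c)) (by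
        intro r hr
        have hr0 : 0 < r := by linarith [hr.1]
        have hur : u ρ ≤ u r := le_of_hasDerivAt_nonneg hr.1
          (fun s hs => hu s (by linarith [hs.1])) (fun s hs => hv0 s hs.1)
        have h2 := (accel_sub_mem hl hla haL hlb hbL hd
          (div_nonneg (hv0 r hr.1) hr0.le) (u r ^ p)).1
        rw [hacc _ (rpow_nonneg (hpos r (by linarith [hr.1])).le p)] at h2
        have h3 : c ≤ u r ^ p / b := by
          rw [hc]
          have := (hpos ρ hρ1).le
          gcongr
        linarith)
    have h2 : c * z = c * ρ + (v ρ + 1) := by rw [hz]; field_simp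
    have := hv0 z hρz
    linarith
  have hneg : ∀ r ≥ r₁, v r < 0 := by
    intro z hz
    by_contra! hvz
    have hlt : r₁ < z := lt_of_le_of_ne hz (by rintro rfl; linarith)
    have hcont : ∀ r ≥ r₁, ContinuousAt (fun r => -v r) r := fun r hr =>
      (hv r (by linarith)).continuousAt.neg
    obtain ⟨y, hy, -, hy0, hyI⟩ := exists_first_zero (g := fun r => -v r) hlt
      (fun r hr => (hcont r hr.1).continuousWithinAt) (by linarith)
      (((hcont r₁ le_rfl).eventually_const_lt (by linarith : 0 < -v r₁)).filter_mono
        nhdsWithin_le_nhds)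
    have h1 := deriv_nonpos_of_pos_left hy (hv y (by linarith)).neg hy0 hyI
    have h0 : v y = 0 := by linarith
    have h2 : 0 < u y ^ p := rpow_pos_of_pos (hpos y (by linarith)) p
    rw [h0, zero_div, hacc _ h2.le] at h1
    have : 0 < u y ^ p / b := by positivity
    linarith
  exact no_decreasing_supersolution hL hp hsub (by linarith)
    (fun r hr => hu r (by linarith)) (fun r hr => hv r (by linarith))
    (fun r hr => hpos r (by linarith)) hneg fun r hr =>
      accel_add_le hl hla haL hlb hbL hd (div_neg_of_neg_of_pos (hneg r hr) (by linarith))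
        (rpow_pos_of_pos (hpos r (by linarith)) p)

section Energy

variable {a b : ℝ} {f : ℝ → ℝ}

/-- Potential energy associated with `v' = accel a b d (v / r) (f u)`. -/
noncomputable def potential (a b : ℝ) (f : ℝ → ℝ) (x : ℝ) : ℝ :=
  ∫ s in (0 : ℝ)..x, slopes b⁻¹ a⁻¹ (f s)

lemma hasDerivAt_potential (hf : Continuous f) (x : ℝ) :
    HasDerivAt (potential a b f) (slopes b⁻¹ a⁻¹ (f x)) x :=
  (((continuous_slopes _ _).comp hf).integral_hasStrictDerivAt 0 x).hasDerivAt

@[simp] lemma potential_zero : potential a b f 0 = 0 := by simp [potential]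

lemma mul_slopes_pos (ha : 0 < a) (hb : 0 < b) (hfx : ∀ x ≠ 0, 0 < x * f x) {x : ℝ}
    (hx : x ≠ 0) : 0 < x * slopes b⁻¹ a⁻¹ (f x) := by
  have := hfx x hx
  rcases lt_or_gt_of_ne hx with h | h
  · have h1 : f x < 0 := by
      by_contra! h2
      nlinarith
    rw [slopes_of_nonpos h1.le]
    exact mul_pos_of_neg_of_neg h (mul_neg_of_pos_of_neg (by positivity) h1)
  · have h1 : 0 < f x := (pos_iff_pos_of_mul_pos this).1 h
    rw [slopes_of_nonneg h1.le]
    positivity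

lemma potential_mono (ha : 0 < a) (hb : 0 < b) (hf : Continuous f)
    (hfx : ∀ x ≠ 0, 0 < x * f x) {x y : ℝ} (hx : 0 ≤ x) (hxy : x ≤ y) :
    potential a b f x ≤ potential a b f y := by
  refine le_of_hasDerivAt_nonneg hxy (fun r _ => hasDerivAt_potential hf r) fun r hr => ?_
  rcases (hx.trans hr.1).eq_or_lt' with h | h
  · have h0 : slopes b⁻¹ a⁻¹ (f r) ∈ closure (Ioi 0) := by
      have hc : Continuous fun r => slopes b⁻¹ a⁻¹ (f r) := by fun_prop
      refine hc.continuousWithinAt.mem_closure (s := Ioi r)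
        (by rw [closure_Ioi]; exact self_mem_Ici) fun s hs => ?_
      have hs0 : 0 < s := by rw [h] at hs; exact hs
      exact (pos_iff_pos_of_mul_pos (mul_slopes_pos ha hb hfx hs0.ne')).1 hs0
    rw [closure_Ioi] at h0
    exact h0
  · exact ((pos_iff_pos_of_mul_pos (mul_slopes_pos ha hb hfx h.ne')).1 h).le

lemma potential_neg (x : ℝ) :
    potential a b f (-x) = potential b a (fun s => -f (-s)) x := by
  have := intervalIntegral.integral_comp_neg (a := 0) (b := x) fun s => slopes b⁻¹ a⁻¹ (f s)
  rw [neg_zero, intervalIntegral.integral_symm (0 : ℝ) (-x)] at this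
  simp only [potential, slopes_neg, intervalIntegral.integral_neg]
  rw [this, neg_neg]

lemma potential_pos (ha : 0 < a) (hb : 0 < b) (hf : Continuous f)
    (hfx : ∀ x ≠ 0, 0 < x * f x) {x : ℝ} (hx : 0 < x) : 0 < potential a b f x := by
  have hc : Continuous fun r => slopes b⁻¹ a⁻¹ (f r) := by fun_prop
  refine intervalIntegral.intervalIntegral_pos_of_pos_on (hc.intervalIntegrable _ _)
    (fun s hs => ?_) hx
  exact (pos_iff_pos_of_mul_pos (mul_slopes_pos ha hb hfx hs.1.ne')).1 hs.1

lemma neg_mul_pos (hfx : ∀ x ≠ 0, 0 < x * f x) : ∀ x ≠ 0, 0 < x * -f (-x) := by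
  intro x hx
  have := hfx (-x) (neg_ne_zero.2 hx)
  linarith

lemma potential_nonneg (ha : 0 < a) (hb : 0 < b) (hf : Continuous f)
    (hfx : ∀ x ≠ 0, 0 < x * f x) (x : ℝ) : 0 ≤ potential a b f x := by
  rcases le_total 0 x with h | h
  · simpa using potential_mono ha hb hf hfx le_rfl h
  · rw [← neg_neg x, potential_neg]
    simpa using potential_mono hb ha (by fun_prop) (neg_mul_pos hfx) le_rfl (neg_nonneg.2 h)

variable {d l L : ℝ} {u v : ℝ → ℝ}

/-- The energy is nonincreasing along solutions, which confines small solutions to `[-1, 1]`, and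
it decays at most algebraically, which makes all zeros simple. -/
lemma energy_bounds (hl : 0 < l) (hla : l ≤ a) (haL : a ≤ L)
    (hlb : l ≤ b) (hbL : b ≤ L) (hd : 0 ≤ d) (hf : Continuous f) (hfx : ∀ x ≠ 0, 0 < x * f x)
    (hu : ∀ r, HasDerivAt u (v r) r) (hvc : Continuous v) (hv0 : v 0 = 0) (hu0 : 0 < u 0)
    (hv : ∀ r, 0 < r → HasDerivAt v (accel a b d (v r / r) (f (u r))) r) :
    (∀ r, 0 ≤ r → potential a b f (u r) ≤ potential a b f (u 0)) ∧
      ∀ r, 0 < r → u r = 0 → v r ≠ 0 := by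
  have ha : 0 < a := by linarith
  have hb : 0 < b := by linarith
  have huc : Continuous u := continuous_iff_continuousAt.2 fun r => (hu r).continuousAt
  have hPc : Continuous (potential a b f) :=
    continuous_iff_continuousAt.2 fun x => (hasDerivAt_potential hf x).continuousAt
  set E : ℝ → ℝ := fun r => v r ^ 2 / 2 + potential a b f (u r) with hE
  set E' : ℝ → ℝ := fun r =>
    v r * (accel a b d (v r / r) (f (u r)) - accel a b d 0 (f (u r))) with hE'
  have hEc : Continuous E := by fun_prop
  have hacc : ∀ h, accel a b d 0 h = -slopes b⁻¹ a⁻¹ h := by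
    intro h
    rw [accel, slopes_zero, mul_zero, neg_zero, zero_sub, slopes_neg]
  have hEd : ∀ r, 0 < r → HasDerivAt E (E' r) r := by
    intro r hr
    refine ((((hv r hr).pow 2).div_const 2).add
      ((hasDerivAt_potential hf (u r)).comp r (hu r))).congr_deriv ?_
    simp only [hE', hacc]; push_cast; ring
  have hE'le : ∀ r, 0 < r → E' r ≤ 0 := by
    intro r hr
    rcases le_total 0 (v r) with h | h
    · have := (accel_sub_mem hl hla haL hlb hbL hd (div_nonneg h hr.le) (f (u r))).1
      exact mul_nonpos_of_nonneg_of_nonpos h (by linarith)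
    · have := (accel_sub_mem hl hla haL hlb hbL hd
        (div_nonpos_of_nonpos_of_nonneg h hr.le) (f (u r))).1
      exact mul_nonpos_of_nonpos_of_nonneg h this
  obtain ⟨N, hN⟩ := exists_nat_ge (L / l * d)
  have hE'ge : ∀ r, 0 < r → -(2 * N * E r / r) ≤ E' r := by
    intro r hr
    have h1 := abs_accel_sub_le hl hla haL hlb hbL hd (v r / r) 0 (f (u r))
    have h2 : |E' r| ≤ N * (v r ^ 2 / r) := by
      rw [hE', abs_mul]
      calc _ ≤ |v r| * (N * |v r / r - 0|) := by gcongr; exact h1.trans (by gcongr)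
        _ = _ := by rw [sub_zero, abs_div, abs_of_pos hr, ← sq_abs (v r)]; ring
    have h3 : v r ^ 2 ≤ 2 * E r := by
      have := potential_nonneg ha hb hf hfx (u r)
      simp only [hE]; linarith
    have h4 : N * (v r ^ 2 / r) ≤ N * (2 * E r / r) := by gcongr
    have h5 := neg_abs_le (E' r)
    have h6 : 2 * N * E r / r = N * (2 * E r / r) := by ring
    linarith
  have hE0 : E 0 = potential a b f (u 0) := by simp [hE, hv0]
  have hlim : ∀ y : ℝ, 0 < y → (0 : ℝ) ∈ closure (Ioc 0 y) := fun y hy => by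
    rw [closure_Ioc hy.ne]; exact left_mem_Icc.2 hy.le
  refine ⟨fun r hr => ?_, fun r hr h0 hv' => ?_⟩
  · have h1 : E r ≤ E 0 := by
      rcases hr.eq_or_lt with rfl | hr
      · rfl
      have : E 0 ∈ closure (Ici (E r)) := by
        refine hEc.continuousWithinAt.mem_closure (hlim r hr) fun s hs => ?_
        have := le_of_hasDerivAt_nonneg (g := fun s => -E s) (g' := fun s => -E' s) hs.2
          (fun t ht => (hEd t (hs.1.trans_le ht.1)).neg)
          (fun t ht => by linarith [hE'le t (hs.1.trans_le ht.1)])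
        exact neg_le_neg_iff.1 this
      rwa [isClosed_Ici.closure_eq] at this
    rw [hE0] at h1
    have : 0 ≤ v r ^ 2 / 2 := by positivity
    simp only [hE] at h1
    linarith
  · have hEr : E r = 0 := by simp [hE, h0, hv']
    have : E 0 ∈ closure (Iic 0) := by
      refine hEc.continuousWithinAt.mem_closure (hlim r hr) fun s hs => ?_
      have h1 := le_of_hasDerivAt_nonneg (g := fun s => s ^ (2 * N) * E s) hs.2
        (fun t ht => (hasDerivAt_pow (2 * N) t).mul (hEd t (hs.1.trans_le ht.1))) (by
          intro t ht
          have ht0 : 0 < t := hs.1.trans_le ht.1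
          have h2 := mul_le_mul_of_nonneg_left (hE'ge t ht0) (pow_nonneg ht0.le (2 * N))
          have h3 : (2 * N : ℕ) * t ^ (2 * N - 1) * E t = t ^ (2 * N) * (2 * N * E t / t) := by
            rcases N with _ | N
            · simp
            · rw [show 2 * (N + 1) - 1 = 2 * N + 1 by omega,
                show 2 * (N + 1) = 2 * N + 1 + 1 by omega, pow_succ t (2 * N + 1)]
              field_simp
              push_cast; ring
          rw [h3]
          linarith)
      rw [hEr, mul_zero] at h1
      exact nonpos_of_mul_nonpos_right h1 (pow_pos hs.1 _)
    rw [isClosed_Iic.closure_eq, hE0] at this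
    exact (potential_pos ha hb hf hfx hu0).not_ge this

end Energy

lemma hasDerivAt_abs_rpow_mul_self {p : ℝ} (hp : 1 < p) (x : ℝ) :
    HasDerivAt (fun x : ℝ => |x| ^ (p - 1) * x) (p * |x| ^ (p - 1)) x := by
  rcases lt_trichotomy x 0 with h | rfl | h
  · have h1 : HasDerivAt (fun x : ℝ => -(-x) ^ p) (p * |x| ^ (p - 1)) x := by
      refine (((hasDerivAt_id x).neg.rpow_const (Or.inl (neg_pos.2 h).ne')).neg).congr_deriv ?_
      rw [abs_of_neg h]; simp
    refine h1.congr_of_eventuallyEq ?_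
    filter_upwards [gt_mem_nhds h] with y hy
    have hy0 : y ≠ 0 := hy.ne
    rw [abs_of_neg hy, Real.rpow_sub_one (neg_pos.2 hy).ne']
    field_simp
  · rw [hasDerivAt_iff_tendsto_slope, abs_zero, Real.zero_rpow (by linarith), mul_zero]
    have h1 : Filter.Tendsto (fun x : ℝ => |x| ^ (p - 1)) (nhdsWithin 0 {0}ᶜ) (nhds 0) := by
      have : ContinuousAt (fun x : ℝ => |x| ^ (p - 1)) 0 :=
        continuous_abs.continuousAt.rpow_const (Or.inr (by linarith))
      have h2 := this.tendsto
      rw [abs_zero, Real.zero_rpow (by linarith)] at h2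
      exact h2.mono_left nhdsWithin_le_nhds
    refine h1.congr' ?_
    filter_upwards [self_mem_nhdsWithin] with y hy
    have hy0 : y ≠ 0 := hy
    rw [slope_def_field]; field_simp; simp
  · refine (Real.hasDerivAt_rpow_const (Or.inl h.ne') :
      HasDerivAt (fun x : ℝ => x ^ p) _ x).congr_of_eventuallyEq ?_ |>.congr_deriv ?_
    · filter_upwards [lt_mem_nhds h] with y hy
      rw [abs_of_pos hy, Real.rpow_sub_one hy.ne']
      field_simp
    · rw [abs_of_pos h]

lemma abs_rpow_mul_self_of_pos {p x : ℝ} (hx : 0 < x) : |x| ^ (p - 1) * x = x ^ p := by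
  rw [abs_of_pos hx, Real.rpow_sub_one hx.ne']
  field_simp

open Filter Topology in
/-- Zeros of an oscillating function with simple zeros can be enumerated in increasing order. -/
lemma exists_nodes {u v : ℝ → ℝ} (hu : ∀ r, HasDerivAt u (v r) r) (hu0 : 0 < u 0)
    (hsimple : ∀ r, 0 < r → u r = 0 → v r ≠ 0)
    (hosc : ∀ x, 0 ≤ x → ∀ j : ℕ, ∃ z > x, (-1) ^ j * u z ≤ 0) :
    ∃ rr : ℕ → ℝ, rr 0 = 0 ∧ (∀ j, rr j < rr (j + 1)) ∧ (∀ j, u (rr (j + 1)) = 0) ∧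
      ∀ j, ∀ x ∈ Ioo (rr j) (rr (j + 1)), 0 < (-1) ^ j * u x := by
  have step : ∀ (j : ℕ) (x : ℝ), 0 ≤ x ∧ (∀ᶠ r in 𝓝[>] x, 0 < (-1) ^ j * u r) →
      ∃ y, x < y ∧ u y = 0 ∧ (∀ r ∈ Ioo x y, 0 < (-1) ^ j * u r) ∧
        ∀ᶠ r in 𝓝[>] y, 0 < (-1) ^ (j + 1) * u r := by
    rintro j x ⟨hx, hxe⟩
    obtain ⟨z, hxz, hz⟩ := hosc x hx j
    have hd : ∀ r, HasDerivAt (fun r => (-1) ^ j * u r) ((-1) ^ j * v r) r :=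
      fun r => (hu r).const_mul _
    obtain ⟨y, hxy, -, hy0, hyI⟩ := exists_first_zero hxz
      (fun r _ => (hd r).continuousAt.continuousWithinAt) hz hxe
    have huy : u y = 0 := by simpa using hy0
    have h1 : (-1) ^ j * v y ≠ 0 := mul_ne_zero (by simp) (hsimple y (by linarith) huy)
    have h2 := (deriv_nonpos_of_pos_left hxy (hd y) hy0 hyI).lt_of_ne h1
    refine ⟨y, hxy, huy, hyI, (eventually_neg_right (hd y) hy0 h2).mono fun r hr => ?_⟩
    rw [pow_succ]; linarith
  choose! next h1 h2 h3 h4 using step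
  set rr : ℕ → ℝ := fun j => Nat.rec 0 (fun j x => next j x) j with hrr
  have hP : ∀ j, 0 ≤ rr j ∧ ∀ᶠ r in 𝓝[>] (rr j), 0 < (-1) ^ j * u r := by
    intro j
    induction j with
    | zero =>
      refine ⟨le_rfl, ?_⟩
      simpa [hrr] using ((hu 0).continuousAt.eventually_const_lt hu0).filter_mono
        nhdsWithin_le_nhds
    | succ j ih => exact ⟨ih.1.trans (h1 j _ ih).le, h4 j _ ih⟩
  exact ⟨rr, rfl, fun j => h1 j _ (hP j), fun j => h2 j _ (hP j), fun j => h3 j _ (hP j)⟩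

lemma exists_oscillating_solution {a b d l L p : ℝ} (hl : 0 < l) (hla : l ≤ a) (haL : a ≤ L)
    (hlb : l ≤ b) (hbL : b ≤ L) (hd : 0 ≤ d) (hp : 1 < p)
    (hsub : L / l * d = 1 ∨ 1 < L / l * d ∧ p * (L / l * d - 1) ≤ L / l * d + 1) :
    ∃ (u v : ℝ → ℝ) (rr : ℕ → ℝ), (∀ r, HasDerivAt u (v r) r) ∧ Continuous v ∧ v 0 = 0 ∧
      0 < u 0 ∧
      (∀ r, 0 < r → HasDerivAt v (accel a b d (v r / r) (|u r| ^ (p - 1) * u r)) r) ∧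
      rr 0 = 0 ∧ (∀ j, rr j < rr (j + 1)) ∧ (∀ j, u (rr (j + 1)) = 0) ∧
      ∀ j, ∀ x ∈ Ioo (rr j) (rr (j + 1)), 0 < (-1) ^ j * u x := by
  have ha : 0 < a := by linarith
  have hb : 0 < b := by linarith
  set F : ℝ → ℝ := fun x => |x| ^ (p - 1) * x with hF
  set cl : ℝ → ℝ := fun x => max (-1) (min x 1) with hcl
  have hcl1 : ∀ x, cl x ∈ Icc (-1 : ℝ) 1 := fun x =>
    ⟨le_max_left _ _, max_le (by norm_num) (min_le_right _ _)⟩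
  have hclL : ∀ x y, |cl x - cl y| ≤ |x - y| := by
    intro x y
    have := ((LipschitzWith.id (α := ℝ)).min_const 1).const_max (-1)
    simpa [Real.dist_eq] using this.dist_le_mul x y
  have hFd := hasDerivAt_abs_rpow_mul_self hp
  have hFc : Continuous F := continuous_iff_continuousAt.2 fun x => (hFd x).continuousAt
  set f : ℝ → ℝ := fun x => F (cl x) with hf
  have hfc : Continuous f := by fun_prop
  have hfL : ∀ x y, |f x - f y| ≤ p * |x - y| := by
    intro x y
    have := (convex_Icc (-1 : ℝ) 1).norm_image_sub_le_of_norm_hasDerivWithin_le (C := p)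
      (fun x _ => (hFd x).hasDerivWithinAt) (fun x hx => by
        rw [norm_mul, Real.norm_of_nonneg (by linarith), Real.norm_of_nonneg (by positivity)]
        exact mul_le_of_le_one_right (by linarith)
          (Real.rpow_le_one (abs_nonneg x) (abs_le.2 hx) (by linarith)))
      (hcl1 y) (hcl1 x)
    exact this.trans (mul_le_mul_of_nonneg_left (hclL x y) (by linarith))
  have hfx : ∀ x ≠ 0, 0 < x * f x := by
    intro x hx
    have h1 : 0 < x * cl x := by
      rcases lt_or_gt_of_ne hx with h | h
      · exact mul_pos_of_neg_of_neg h (max_lt (by norm_num) ((min_le_left _ _).trans_lt h))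
      · exact mul_pos h (lt_max_of_lt_right (lt_min h one_pos))
    have h2 : 0 < |cl x| ^ (p - 1) :=
      Real.rpow_pos_of_pos (abs_pos.2 (right_ne_zero_of_mul h1.ne')) _
    calc 0 < |cl x| ^ (p - 1) * (x * cl x) := mul_pos h2 h1
      _ = _ := by simp only [hf, hF]; ring
  have hG1 := potential_pos ha hb hfc hfx one_pos
  have hG2 : 0 < potential a b f (-1) := by
    rw [potential_neg]
    exact potential_pos hb ha (by fun_prop) (neg_mul_pos hfx) one_pos
  obtain ⟨δ, ⟨hδ1, hδ2⟩, hδ0⟩ : ∃ δ : ℝ, (potential a b f δ < potential a b f 1 ∧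
      potential a b f δ < potential a b f (-1)) ∧ 0 < δ := by
    have hc := (hasDerivAt_potential (a := a) (b := b) hfc 0).continuousAt
    have h1 := (hc.eventually_lt_const (by simpa using hG1)).and
      (hc.eventually_lt_const (by simpa using hG2))
    exact ((h1.filter_mono nhdsWithin_le_nhds).and
      (self_mem_nhdsWithin (s := Ioi (0 : ℝ)))).exists
  obtain ⟨u, v, hu, hvc, hv0, rfl, hv⟩ :=
    exists_radial_solution hl hla haL hlb hbL hd (by linarith) hfL hfc δ
  obtain ⟨hen, hsimple⟩ := energy_bounds hl hla haL hlb hbL hd hfc hfx hu hvc hv0 hδ0 hv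
  have hclu : ∀ r, 0 ≤ r → cl (u r) = u r := by
    intro r hr
    have h1 : u r ≤ 1 := by
      by_contra! h
      linarith [hen r hr, potential_mono ha hb hfc hfx zero_le_one h.le]
    have h2 : -1 ≤ u r := by
      by_contra! h
      have := potential_mono hb ha (by fun_prop) (neg_mul_pos hfx) zero_le_one
        (by linarith : 1 ≤ -u r)
      rw [← potential_neg, ← potential_neg, neg_neg] at this
      linarith [hen r hr]
    simp [hcl, h1, h2]
  have hv' : ∀ r, 0 < r → HasDerivAt v (accel a b d (v r / r) (|u r| ^ (p - 1) * u r)) r := by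
    intro r hr
    have := hv r hr
    simpa only [hf, hclu r hr.le] using this
  have hosc : ∀ x, 0 ≤ x → ∀ j : ℕ, ∃ z > x, (-1) ^ j * u z ≤ 0 := by
    intro x hx j
    by_contra! h
    rcases neg_one_pow_eq_or ℝ j with hj | hj
    · simp only [hj, one_mul] at h
      refine not_eventually_pos hl hla haL hlb hbL hd hp hsub (fun r _ => hu r)
        (fun r hr => ?_) h
      rw [← abs_rpow_mul_self_of_pos (h r hr)]
      exact hv' r (by linarith)
    · simp only [hj, neg_one_mul] at h
      refine not_eventually_pos hl hlb hbL hla haL hd hp hsub (u := fun r => -u r)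
        (v := fun r => -v r) (fun r _ => (hu r).neg) (fun r hr => ?_) h
      refine (hv' r (by linarith)).neg.congr_deriv ?_
      rw [← abs_rpow_mul_self_of_pos (h r hr), abs_neg, mul_neg, neg_div, accel_neg]
  obtain ⟨rr, h1, h2, h3, h4⟩ := exists_nodes hu hδ0 hsimple hosc
  exact ⟨u, v, rr, hu, hvc, hv0, hδ0, hv', h1, h2, h3, h4⟩

lemma nodalBallSol_one {a b d l L p R : ℝ} {k : ℕ} (hl : 0 < l) (hla : l ≤ a) (haL : a ≤ L)
    (hlb : l ≤ b) (hbL : b ≤ L) (hd : 0 ≤ d) (hp : 1 < p)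
    (hsub : L / l * d = 1 ∨ 1 < L / l * d ∧ p * (L / l * d - 1) ≤ L / l * d + 1)
    (hR : 0 < R) (hk : 1 ≤ k) :
    NodalBallSol p R k (fun u' u'' r => slopes a b (u'' r) + d * slopes a b (u' r / r)) 1 := by
  obtain ⟨u, v, rr, hu, hvc, hv0, hu0, hv, hrr0, hrr, hz, hsign⟩ :=
    exists_oscillating_solution hl hla haL hlb hbL hd hp hsub
  have ha : 0 < a := by linarith
  have hb : 0 < b := by linarith
  have hmono : StrictMono rr := strictMono_nat_of_lt_succ hrr
  have hrk : 0 < rr k := hrr0 ▸ hmono (by omega)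
  set σ : ℝ := rr k / R with hσ
  have hσ0 : 0 < σ := by positivity
  set γ : ℝ := σ ^ (2 / (p - 1)) with hγ
  have hγ0 : 0 < γ := by positivity
  have hγσ : γ ^ (p - 1) = σ ^ 2 := by
    rw [hγ, ← Real.rpow_mul hσ0.le, div_mul_cancel₀ _ (by linarith), Real.rpow_two]
  have hσR : σ * R = rr k := by rw [hσ]; field_simp
  have huc : Continuous u := continuous_iff_continuousAt.2 fun r => (hu r).continuousAt
  have hcF : Continuous fun x : ℝ => |x| ^ (p - 1) * x :=
    continuous_iff_continuousAt.2 fun x => (hasDerivAt_abs_rpow_mul_self hp x).continuousAt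
  have hlin : ∀ r, HasDerivAt (fun r => σ * r) σ r := fun r => by
    simpa using (hasDerivAt_id r).const_mul σ
  have hrσ : rr k / σ = R := by rw [← hσR]; field_simp
  clear_value σ γ
  set A : ℝ → ℝ := fun r => accel a b d (v r / r) (|u r| ^ (p - 1) * u r) with hA
  refine ⟨fun r => γ * u (σ * r), fun r => γ * (v (σ * r) * σ),
    fun r => γ * (A (σ * r) * σ * σ), fun j => rr j / σ, ?_, ?_, fun j _ => ?_,
    fun r _ => ?_, ?_, fun r hr => ?_, ?_, ?_, ?_, fun r hr => ?_, ?_, fun j _ hj => ?_,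
    fun j _ x hx => ?_⟩
  · simp [hrr0]
  · exact hrσ
  · exact div_lt_div_of_pos_right (hrr j) hσ0
  · exact (HasDerivAt.comp r (hu (σ * r)) (hlin r)).const_mul γ
  · exact Continuous.continuousOn (by fun_prop)
  · exact ((HasDerivAt.comp r (hv (σ * r) (mul_pos hσ0 hr.1)) (hlin r)).mul_const σ).const_mul γ
  · have h1 : ContinuousOn (fun r => v (σ * r) / (σ * r)) (Ioc 0 R) :=
      ContinuousOn.div (by fun_prop) (by fun_prop) fun r hr => (mul_pos hσ0 hr.1).ne'
    have h2 : Continuous fun r => |u (σ * r)| ^ (p - 1) * u (σ * r) :=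
      hcF.comp (huc.comp (continuous_const.mul continuous_id))
    have h3 : ContinuousOn (fun r => A (σ * r)) (Ioc 0 R) :=
      (continuous_accel a b d).comp_continuousOn
        (f := fun r => (v (σ * r) / (σ * r), |u (σ * r)| ^ (p - 1) * u (σ * r)))
        (h1.prodMk h2.continuousOn)
    exact ((h3.mul_const σ).mul_const σ).const_mul γ
  · simp [hv0]
  · obtain ⟨j, rfl⟩ : ∃ j, k = j + 1 := ⟨k - 1, by omega⟩
    simp [hσR, hz]
  · have hr0 : r ≠ 0 := hr.1.ne'
    have h1 : γ * (A (σ * r) * σ * σ) = γ * σ ^ 2 * A (σ * r) := by ring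
    have h2 : γ * (v (σ * r) * σ) / r = γ * σ ^ 2 * (v (σ * r) / (σ * r)) := by field_simp
    have hc : 0 ≤ γ * σ ^ 2 := by positivity
    have h3 := slopes_accel ha hb d (v (σ * r) / (σ * r))
      (|u (σ * r)| ^ (p - 1) * u (σ * r))
    simp only [h1, h2, slopes_mul hc]
    rw [abs_mul, abs_of_pos hγ0, Real.mul_rpow hγ0.le (abs_nonneg _), hγσ]
    linear_combination (-γ * σ ^ 2) * h3
  · simpa using mul_pos hγ0 hu0
  · obtain ⟨i, rfl⟩ : ∃ i, j = i + 1 := ⟨j - 1, by omega⟩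
    have : σ * (rr (i + 1) / σ) = rr (i + 1) := by field_simp
    simp [this, hz]
  · have h1 : σ * x ∈ Ioo (rr j) (rr (j + 1)) := by
      have h2 := (div_lt_iff₀ hσ0).1 hx.1
      have h3 := (lt_div_iff₀ hσ0).1 hx.2
      exact ⟨by linarith, by linarith⟩
    have := mul_pos hγ0 (hsign j _ h1)
    calc 0 < γ * ((-1) ^ j * u (σ * x)) := this
      _ = _ := by ring

lemma nodalBallSol_neg_one {a b d p R : ℝ} {k : ℕ}
    (h : NodalBallSol p R k
      (fun u' u'' r => slopes b a (u'' r) + d * slopes b a (u' r / r)) 1) :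
    NodalBallSol p R k
      (fun u' u'' r => slopes a b (u'' r) + d * slopes a b (u' r / r)) (-1) := by
  obtain ⟨w, w', w'', rr, h0, h1, h2, h3, h4, h5, h6, h7, h8, h9, h10, h11, h12⟩ := h
  refine ⟨fun r => -w r, fun r => -w' r, fun r => -w'' r, rr, h0, h1, h2,
    fun r hr => (h3 r hr).neg, h4.neg, fun r hr => (h5 r hr).neg, h6.neg, by simp [h7],
    by simp [h8], fun r hr => ?_, by linarith, fun j hj hj' => by simp [h11 j hj hj'],
    fun j hj x hx => by linarith [h12 j hj x hx]⟩
  have := h9 r hr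
  simp only [neg_div, slopes_neg, abs_neg]
  linarith

/-- Theorem 3 (paper): for `p` subcritical (`p ≤ ñ₋/(ñ₋−2)`, or no restriction if `ñ₋ = 2`),
each of the problems `−𝓜^±_{λ,Λ}(D²u) = |u|^{p−1}u` in the ball `B_R`, `u = 0` on `∂B_R`,
has, for every `k ≥ 1`, radial sign-changing solutions with `k` nodal regions of both sign
patterns. -/
theorem sign_changing_radial_solutions_in_ball
    (n : ℕ) (hn : 2 ≤ n) (lam Lam p ntil : ℝ) (hlam : 0 < lam) (hlL : lam ≤ Lam) (hp : 1 < p)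
    (hnt : ntil = Lam / lam * ((n : ℝ) - 1) + 1)
    (hsub : ntil = 2 ∨ (2 < ntil ∧ p ≤ ntil / (ntil - 2)))
    (R : ℝ) (hR : 0 < R) (k : ℕ) (hk : 1 ≤ k) :
    NodalBallSol p R k (Pp n lam Lam) 1 ∧ NodalBallSol p R k (Pp n lam Lam) (-1) ∧
      NodalBallSol p R k (Pm n lam Lam) 1 ∧ NodalBallSol p R k (Pm n lam Lam) (-1) := by
  have hd : (0 : ℝ) ≤ (n : ℝ) - 1 := by
    have : (2 : ℝ) ≤ n := by exact_mod_cast hn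
    linarith
  have hsub' : Lam / lam * ((n : ℝ) - 1) = 1 ∨ 1 < Lam / lam * ((n : ℝ) - 1) ∧
      p * (Lam / lam * ((n : ℝ) - 1) - 1) ≤ Lam / lam * ((n : ℝ) - 1) + 1 := by
    rcases hsub with h | ⟨h, hle⟩
    · left; linarith
    · right
      rw [le_div_iff₀ (by linarith)] at hle
      rw [show Lam / lam * ((n : ℝ) - 1) = ntil - 1 by linarith]
      exact ⟨by linarith, by linarith⟩
  have h1 := nodalBallSol_one hlam hlL le_rfl le_rfl hlL hd hp hsub' hR hk
  have h2 := nodalBallSol_one hlam le_rfl hlL hlL le_rfl hd hp hsub' hR hk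
  exact ⟨h1, nodalBallSol_neg_one h2, h2, nodalBallSol_neg_one h1⟩
end

section
/- Let 0 < a < b. Then there exist functions w₊, w₋ : [a,b] → ℝ, twice continuously differentiable on [a,b], such that: w₊(a) = 0, w₊'(b) = 0, w₊(r) > 0 for all r ∈ (a,b], and −𝓕(r, w₊''(r), w₊'(r)/r) = w₊(r)^p for all r ∈ (a,b); and w₋(a) = 0, w₋'(b) = 0, w₋(r) < 0 for all r ∈ (a,b], and −𝓕(r, w₋''(r), w₋'(r)/r) = −|w₋(r)|^p for all r ∈ (a,b). (Equivalently: the mixed boundary value problem F(x,D²u) + |u|^{p−1}u = 0 in the annulus A_{a,b}, u = 0 on |x| = a, ∂u/∂n = 0 on |x| = b, has a positive and a negative radial solution.) -/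
open Real Set

/-- Uniform ellipticity of the radial form `𝓕(r, m, l)` of a uniformly elliptic operator. -/
def UnifElliptic (n : ℕ) (lam Lam : ℝ) (F : ℝ → ℝ → ℝ → ℝ) : Prop :=
  ∀ r : ℝ, 0 < r → ∀ m l s t : ℝ, 0 ≤ s → 0 ≤ t →
    lam * (s + ((n : ℝ) - 1) * t) ≤ F r (m + s) (l + t) - F r m l ∧
      F r (m + s) (l + t) - F r m l ≤ Lam * (s + ((n : ℝ) - 1) * t)

theorem exists_sub_eq_deriv_mul {f f' : ℝ → ℝ} {x y : ℝ} (hxy : x ≤ y)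
    (hf : ∀ t ∈ Icc x y, HasDerivAt f (f' t) t) :
    ∃ c ∈ Icc x y, f y - f x = f' c * (y - x) := by
  rcases hxy.eq_or_lt with rfl | hlt
  · exact ⟨x, left_mem_Icc.2 le_rfl, by simp⟩
  · obtain ⟨c, hc, h⟩ := exists_hasDerivAt_eq_slope f f' hlt
      (fun t ht => (hf t ht).continuousAt.continuousWithinAt)
      (fun t ht => hf t (Ioo_subset_Icc_self ht))
    refine ⟨c, Ioo_subset_Icc_self hc, ?_⟩
    rw [h, div_mul_cancel₀ _ (sub_pos.2 hlt).ne']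

namespace UnifElliptic

variable {n : ℕ} {lam Lam : ℝ} {F : ℝ → ℝ → ℝ → ℝ}

theorem neg_reflect (h : UnifElliptic n lam Lam F) :
    UnifElliptic n lam Lam fun r m l => -F r (-m) (-l) := by
  intro r hr m l s t hs ht
  have h1 := h r hr (-(m + s)) (-(l + t)) s t hs ht
  rw [show -(m + s) + s = -m by ring, show -(l + t) + t = -l by ring] at h1
  constructor <;> linarith [h1.1, h1.2]

/-- Stability of the second-derivative argument with respect to the other data. -/
theorem sub_le (h : UnifElliptic n lam Lam F) (hn : 2 ≤ n) (hlam : 0 < lam) (hlL : lam ≤ Lam)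
    {r : ℝ} (hr : 0 < r) (m m' l l' : ℝ) :
    m' - m ≤ 1 / lam * |F r m' l' - F r m l| + Lam * ((n : ℝ) - 1) / lam * |l' - l| := by
  have hn1 : (0 : ℝ) ≤ (n : ℝ) - 1 := by
    have : (2 : ℝ) ≤ n := by exact_mod_cast hn
    linarith
  have hLam : 0 ≤ Lam := hlam.le.trans hlL
  rcases le_total m' m with hm | hm
  · have : 0 ≤ 1 / lam * |F r m' l' - F r m l| + Lam * ((n : ℝ) - 1) / lam * |l' - l| := by
      positivity
    linarith
  have key : lam * (m' - m) ≤ |F r m' l' - F r m l| + Lam * ((n : ℝ) - 1) * |l' - l| := by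
    have habs := le_abs_self (F r m' l' - F r m l)
    rcases le_total l l' with hl | hl
    · have h1 := (h r hr m l (m' - m) (l' - l) (by linarith) (by linarith)).1
      rw [add_sub_cancel, add_sub_cancel] at h1
      have h2 : 0 ≤ lam * (((n : ℝ) - 1) * (l' - l)) :=
        mul_nonneg hlam.le (mul_nonneg hn1 (by linarith))
      have h3 : 0 ≤ Lam * ((n : ℝ) - 1) * |l' - l| := by positivity
      linarith
    · have h1 := (h r hr m l' (m' - m) 0 (by linarith) le_rfl).1
      have h2 := (h r hr m l' 0 (l - l') le_rfl (by linarith)).2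
      rw [add_sub_cancel, add_zero] at h1
      rw [add_sub_cancel, add_zero] at h2
      rw [abs_of_nonpos (by linarith : l' - l ≤ 0)]
      linarith
  calc m' - m = 1 / lam * (lam * (m' - m)) := by field_simp
    _ ≤ 1 / lam * (|F r m' l' - F r m l| + Lam * ((n : ℝ) - 1) * |l' - l|) := by gcongr
    _ = _ := by ring

theorem abs_sub_le (h : UnifElliptic n lam Lam F) (hn : 2 ≤ n) (hlam : 0 < lam) (hlL : lam ≤ Lam)
    {r : ℝ} (hr : 0 < r) (m m' l l' : ℝ) :
    |m' - m| ≤ 1 / lam * |F r m' l' - F r m l| + Lam * ((n : ℝ) - 1) / lam * |l' - l| := by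
  refine abs_le.2 ⟨?_, h.sub_le hn hlam hlL hr m m' l l'⟩
  have := h.sub_le hn hlam hlL hr m' m l' l
  rw [abs_sub_comm (F r m l), abs_sub_comm l l'] at this
  linarith

theorem le_of_nonpos (h : UnifElliptic n lam Lam F) (hn : 2 ≤ n) (hlam : 0 < lam)
    (hlL : lam ≤ Lam) {r : ℝ} (hr : 0 < r) (hF0 : F r 0 0 = 0) {m l : ℝ} (hl : 0 ≤ l)
    (hF : F r m l ≤ 0) : m ≤ 1 / Lam * F r m l := by
  have hn1 : (0 : ℝ) ≤ (n : ℝ) - 1 := by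
    have : (2 : ℝ) ≤ n := by exact_mod_cast hn
    linarith
  have hLam : 0 < Lam := hlam.trans_le hlL
  have hml : 0 ≤ lam * (((n : ℝ) - 1) * l) := by positivity
  have hm : m ≤ 0 := by
    by_contra! hm
    have h1 := (h r hr 0 0 m l hm.le hl).1
    rw [zero_add, zero_add, hF0] at h1
    nlinarith
  have h1 := (h r hr m 0 0 l le_rfl hl).1
  have h2 := (h r hr m 0 (-m) 0 (by linarith) le_rfl).2
  rw [zero_add, zero_add, add_zero] at h1
  rw [add_neg_cancel, add_zero, hF0] at h2
  rw [one_div, ← div_eq_inv_mul, le_div_iff₀ hLam]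
  linarith

theorem strictMono (h : UnifElliptic n lam Lam F) (hlam : 0 < lam) {r : ℝ} (hr : 0 < r) (l : ℝ) :
    StrictMono fun m => F r m l := by
  intro m m' hm
  have h1 := (h r hr m l (m' - m) 0 (by linarith) le_rfl).1
  rw [add_sub_cancel, add_zero] at h1
  have : 0 < lam * (m' - m) := mul_pos hlam (sub_pos.2 hm)
  simp only
  linarith

theorem exists_eq (h : UnifElliptic n lam Lam F) (hlam : 0 < lam)
    (hF : Continuous fun x : ℝ × ℝ × ℝ => F x.1 x.2.1 x.2.2)
    {r : ℝ} (hr : 0 < r) (l c : ℝ) : ∃ m, F r m l = c := by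
  have hcont : Continuous fun m => F r m l :=
    hF.comp (by fun_prop : Continuous fun m : ℝ => (r, m, l))
  set s := |c - F r 0 l| / lam with hs
  have hs0 : 0 ≤ s := by positivity
  have hls : lam * s = |c - F r 0 l| := by rw [hs]; field_simp
  have h1 := (h r hr 0 l s 0 hs0 le_rfl).1
  have h2 := (h r hr (-s) l s 0 hs0 le_rfl).1
  rw [zero_add, add_zero] at h1
  rw [neg_add_cancel, add_zero] at h2
  have := abs_le.1 (le_refl |c - F r 0 l|)
  exact (intermediate_value_Icc (by linarith : -s ≤ s) hcont.continuousOn).trans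
    (image_subset_range _ _) ⟨by linarith, by linarith⟩

end UnifElliptic

/-- Properties of the map `(r, l, c) ↦ m` that solves `F r m l = c`. -/
structure IsResolvent (G : ℝ → ℝ → ℝ → ℝ) (A B D : ℝ) : Prop where
  continuousOn : ContinuousOn (fun q : ℝ × ℝ × ℝ => G q.1 q.2.1 q.2.2) {q | 0 < q.1}
  abs_sub_le : ∀ r > 0, ∀ l c l' c', |G r l' c' - G r l c| ≤ A * |c' - c| + B * |l' - l|
  zero : ∀ r > 0, G r 0 0 = 0
  le_mul : ∀ r > 0, ∀ l c, 0 ≤ l → c ≤ 0 → G r l c ≤ D * c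

theorem UnifElliptic.exists_isResolvent {n : ℕ} {lam Lam : ℝ} {F : ℝ → ℝ → ℝ → ℝ}
    (h : UnifElliptic n lam Lam F) (hn : 2 ≤ n) (hlam : 0 < lam) (hlL : lam ≤ Lam)
    (hF : Continuous fun x : ℝ × ℝ × ℝ => F x.1 x.2.1 x.2.2) (hF0 : ∀ r, F r 0 0 = 0) :
    ∃ G A B D, 0 < A ∧ 0 ≤ B ∧ 0 < D ∧ IsResolvent G A B D ∧
      ∀ r > 0, ∀ l c, F r (G r l c) l = c := by
  have hex : ∀ r l c, ∃ m, 0 < r → F r m l = c := fun r l c => by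
    by_cases hr : 0 < r
    · obtain ⟨m, hm⟩ := h.exists_eq hlam hF hr l c
      exact ⟨m, fun _ => hm⟩
    · exact ⟨0, fun h' => absurd h' hr⟩
  choose G hG using hex
  have hn1 : (0 : ℝ) ≤ (n : ℝ) - 1 := by
    have : (2 : ℝ) ≤ n := by exact_mod_cast hn
    linarith
  have hLam : 0 < Lam := hlam.trans_le hlL
  refine ⟨G, 1 / lam, Lam * ((n : ℝ) - 1) / lam, 1 / Lam, by positivity, by positivity,
    by positivity, ⟨?_, ?_, ?_, ?_⟩, fun r hr l c => hG r l c hr⟩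
  · rintro ⟨r, l, c⟩ (hr : 0 < r)
    refine ContinuousAt.continuousWithinAt ?_
    have hpos : ∀ᶠ q : ℝ × ℝ × ℝ in nhds (r, l, c), 0 < q.1 :=
      continuousAt_fst.eventually (lt_mem_nhds hr)
    have hcont : ∀ m : ℝ, Continuous fun q : ℝ × ℝ × ℝ => F q.1 m q.2.1 := fun m =>
      hF.comp (by fun_prop : Continuous fun q : ℝ × ℝ × ℝ => (q.1, m, q.2.1))
    have hc : Continuous fun q : ℝ × ℝ × ℝ => q.2.2 := by fun_prop
    refine tendsto_order.2 ⟨fun m hm => ?_, fun m hm => ?_⟩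
    · have h1 : F r m l < c := by
        have := h.strictMono hlam hr l hm
        simpa only [hG r l c hr] using this
      filter_upwards [hpos, (hcont m).continuousAt.eventually_lt hc.continuousAt h1] with q hq hq'
      exact (h.strictMono hlam hq q.2.1).lt_iff_lt.1 (by simpa only [hG _ _ _ hq] using hq')
    · have h1 : c < F r m l := by
        have := h.strictMono hlam hr l hm
        simpa only [hG r l c hr] using this
      filter_upwards [hpos, hc.continuousAt.eventually_lt (hcont m).continuousAt h1] with q hq hq'
      exact (h.strictMono hlam hq q.2.1).lt_iff_lt.1 (by simpa only [hG _ _ _ hq] using hq')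
  · intro r hr l c l' c'
    have := h.abs_sub_le hn hlam hlL hr (G r l c) (G r l' c') l l'
    rwa [hG r l c hr, hG r l' c' hr] at this
  · intro r hr
    exact (h.strictMono hlam hr 0).injective (by simp only [hG r 0 0 hr, hF0])
  · intro r hr l c hl hc
    have := h.le_of_nonpos hn hlam hlL hr (hF0 r) hl (m := G r l c) (by rwa [hG r l c hr])
    rwa [hG r l c hr] at this

theorem exists_flow_of_bounded_of_lipschitz {E : Type*} [NormedAddCommGroup E] [NormedSpace ℝ E]
    [CompleteSpace E] {f : ℝ → E → E} {tmin t₀ tmax : ℝ} (h1 : tmin ≤ t₀) (h2 : t₀ ≤ tmax)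
    {K L : NNReal} (hK : ∀ t ∈ Icc tmin tmax, LipschitzWith K (f t))
    (hc : ∀ x, ContinuousOn (f · x) (Icc tmin tmax))
    (hL : ∀ t ∈ Icc tmin tmax, ∀ x, ‖f t x‖ ≤ L) (R : NNReal) :
    ∃ α : E → ℝ → E, (∀ x ∈ Metric.closedBall 0 R, α x t₀ = x ∧
      ∀ t ∈ Icc tmin tmax, HasDerivWithinAt (α x) (f t (α x t)) (Icc tmin tmax) t) ∧
      ∃ L' : NNReal, ∀ t ∈ Icc tmin tmax, LipschitzOnWith L' (α · t) (Metric.closedBall 0 R) := by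
  have hT : 0 ≤ max (tmax - t₀) (t₀ - tmin) := le_max_of_le_left (by linarith)
  have hPL : IsPicardLindelof f (⟨t₀, h1, h2⟩ : Icc tmin tmax) 0
      (R + L * ⟨max (tmax - t₀) (t₀ - tmin), hT⟩) R L K :=
    { lipschitzOnWith := fun t ht => (hK t ht).lipschitzOnWith
      continuousOn := fun x _ => hc x
      norm_le := fun t ht x _ => hL t ht x
      mul_max_le := by
        push_cast
        rw [add_sub_cancel_left]
        exact le_rfl }
  exact hPL.exists_forall_mem_closedBall_eq_hasDerivWithinAt_lipschitzOnWith

/-- Truncation to the interval `[0, M]`. -/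
noncomputable def truncate (M y : ℝ) : ℝ := max 0 (min M y)

theorem truncate_nonneg (M y : ℝ) : 0 ≤ truncate M y := le_max_left _ _

theorem truncate_le {M : ℝ} (hM : 0 ≤ M) (y : ℝ) : truncate M y ≤ M :=
  max_le hM (min_le_left _ _)

theorem truncate_of_le {M y : ℝ} (h : y ≤ M) : truncate M y = max 0 y := by
  rw [truncate, min_eq_right h]

theorem abs_truncate_sub_le (M y z : ℝ) : |truncate M y - truncate M z| ≤ |y - z| := by
  refine (abs_max_sub_max_le_max 0 (min M y) 0 (min M z)).trans ?_
  refine max_le (by simp) ((abs_min_sub_min_le_max M y M z).trans ?_)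
  simp

theorem continuous_truncate (M : ℝ) : Continuous (truncate M) := by
  unfold truncate; fun_prop

theorem exists_lipschitz_truncate_rpow {p : ℝ} (hp : 1 < p) {M : ℝ} (hM : 0 ≤ M) :
    ∃ P ≥ 0, ∀ y z, |truncate M y ^ p - truncate M z ^ p| ≤ P * |y - z| := by
  refine ⟨p * M ^ (p - 1), by positivity, fun y z => ?_⟩
  have h := (convex_Icc (0 : ℝ) M).norm_image_sub_le_of_norm_hasDerivWithin_le
    (f := fun x : ℝ => x ^ p) (f' := fun x => p * x ^ (p - 1)) (C := p * M ^ (p - 1))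
    (fun x _ => (Real.hasDerivAt_rpow_const (Or.inr hp.le)).hasDerivWithinAt)
    (fun x hx => by
      have := hx.1
      rw [Real.norm_of_nonneg (by positivity)]
      have := Real.rpow_le_rpow hx.1 hx.2 (by linarith : 0 ≤ p - 1)
      gcongr)
    ⟨truncate_nonneg M z, truncate_le hM z⟩ ⟨truncate_nonneg M y, truncate_le hM y⟩
  refine h.trans ?_
  gcongr
  exact abs_truncate_sub_le M y z

theorem IsResolvent.abs_apply_le {G : ℝ → ℝ → ℝ → ℝ} {A B D : ℝ} (hG : IsResolvent G A B D) {r : ℝ}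
    (hr : 0 < r) (l c : ℝ) : |G r l c| ≤ A * |c| + B * |l| := by
  simpa [hG.zero r hr] using hG.abs_sub_le r hr 0 0 l c

theorem IsResolvent.exists_truncated_flow {G : ℝ → ℝ → ℝ → ℝ} {A B D : ℝ}
    (hG : IsResolvent G A B D) (hA : 0 ≤ A) (hB : 0 ≤ B) {p : ℝ} (hp : 1 < p) {a b : ℝ}
    (ha : 0 < a) (hab : a < b) {R M : ℝ} (hR : 0 ≤ R) (hM : 0 ≤ M) :
    ∃ W Y : ℝ → ℝ → ℝ, ContinuousOn (fun γ => W γ a) (Icc 0 R) ∧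
      ∀ γ ∈ Icc 0 R, W γ b = γ ∧ Y γ b = 0 ∧ ∀ t ∈ Icc a b,
        HasDerivAt (W γ) (truncate M (Y γ t)) t ∧
        HasDerivAt (Y γ) (G t (truncate M (Y γ t) / t) (-(truncate R (W γ t) ^ p))) t := by
  obtain ⟨P, hP, hlip⟩ := exists_lipschitz_truncate_rpow hp hR
  have hpos : ∀ {t : ℝ}, t ∈ Icc (a / 2) (b + 1) → 0 < t := fun ht => by linarith [ht.1]
  have hdiv : ∀ {t : ℝ}, t ∈ Icc (a / 2) (b + 1) → ∀ y : ℝ, |y / t| ≤ 2 / a * |y| := by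
    intro t ht y
    rw [abs_div, abs_of_pos (hpos ht), div_eq_mul_inv, mul_comm]
    gcongr
    rw [inv_le_comm₀ (hpos ht) (by positivity), inv_div]
    exact ht.1
  set f : ℝ → ℝ × ℝ → ℝ × ℝ := fun t x =>
    (truncate M x.2, G t (truncate M x.2 / t) (-(truncate R x.1 ^ p))) with hf
  have hK0 : 0 ≤ 1 + A * P + B * (2 / a) := by positivity
  have hL0 : 0 ≤ M + (A * R ^ p + B * (2 / a * M)) := by positivity
  obtain ⟨α, hα, L', hL'⟩ := exists_flow_of_bounded_of_lipschitz (f := f)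
    (tmin := a / 2) (t₀ := b) (tmax := b + 1) (K := ⟨_, hK0⟩) (L := ⟨_, hL0⟩)
    (by linarith) (by linarith)
    (by
      intro t ht
      refine LipschitzWith.of_dist_le_mul fun x z => ?_
      have h1 : |x.1 - z.1| ≤ dist x z := by
        rw [Prod.dist_eq]; exact le_max_left _ _
      have h2 : |x.2 - z.2| ≤ dist x z := by
        rw [Prod.dist_eq]; exact le_max_right _ _
      have h3 := abs_truncate_sub_le M x.2 z.2
      have h4 := hG.abs_sub_le t (hpos ht) (truncate M z.2 / t) (-(truncate R z.1 ^ p))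
        (truncate M x.2 / t) (-(truncate R x.1 ^ p))
      have h5 : |-(truncate R x.1 ^ p) - -(truncate R z.1 ^ p)| ≤ P * dist x z := by
        rw [neg_sub_neg, abs_sub_comm]
        exact (hlip _ _).trans (by gcongr)
      have h6 : |truncate M x.2 / t - truncate M z.2 / t| ≤ 2 / a * dist x z := by
        rw [← sub_div]
        exact (hdiv ht _).trans (by gcongr; exact h3.trans h2)
      change dist (f t x) (f t z) ≤ (1 + A * P + B * (2 / a)) * dist x z
      have hd : 0 ≤ dist x z := dist_nonneg
      have h7 : A * |-(truncate R x.1 ^ p) - -(truncate R z.1 ^ p)| ≤ A * (P * dist x z) := by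
        gcongr
      have h8 : B * |truncate M x.2 / t - truncate M z.2 / t| ≤ B * (2 / a * dist x z) := by
        gcongr
      have h9 : 0 ≤ A * (P * dist x z) := by positivity
      have h10 : 0 ≤ B * (2 / a * dist x z) := by positivity
      rw [Prod.dist_eq]
      refine max_le ?_ ?_ <;> simp only [hf, Real.dist_eq] <;> linarith)
    (by
      intro x t ht
      refine continuousWithinAt_const.prodMk ?_
      have h1 : ContinuousWithinAt
          (fun t : ℝ => (t, truncate M x.2 / t, -(truncate R x.1 ^ p))) (Icc (a / 2) (b + 1)) t :=
        continuousWithinAt_id.prodMk ((continuousWithinAt_const.div continuousWithinAt_id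
          (hpos ht).ne').prodMk continuousWithinAt_const)
      exact (hG.continuousOn _ (show 0 < t from hpos ht)).comp h1 fun s hs => hpos hs)
    (by
      intro t ht x
      have h1 : |truncate M x.2| ≤ M := by
        rw [abs_of_nonneg (truncate_nonneg _ _)]; exact truncate_le hM _
      have h2 : |-(truncate R x.1 ^ p)| ≤ R ^ p := by
        rw [abs_neg, abs_of_nonneg (Real.rpow_nonneg (truncate_nonneg _ _) _)]
        exact Real.rpow_le_rpow (truncate_nonneg _ _) (truncate_le hR _) (by linarith)
      have h3 := hG.abs_apply_le (hpos ht) (truncate M x.2 / t) (-(truncate R x.1 ^ p))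
      have h4 : |truncate M x.2 / t| ≤ 2 / a * M := (hdiv ht _).trans (by gcongr)
      have h5 : A * |-(truncate R x.1 ^ p)| ≤ A * R ^ p := by gcongr
      have h6 : B * |truncate M x.2 / t| ≤ B * (2 / a * M) := by gcongr
      have h9 : 0 ≤ A * R ^ p := by positivity
      have h10 : 0 ≤ B * (2 / a * M) := by positivity
      change ‖f t x‖ ≤ M + (A * R ^ p + B * (2 / a * M))
      rw [Prod.norm_def]
      refine max_le ?_ ?_ <;> simp only [hf, Real.norm_eq_abs] <;> linarith)
    ⟨R, hR⟩
  have hmem : ∀ γ ∈ Icc 0 R, ((γ, 0) : ℝ × ℝ) ∈ Metric.closedBall (0 : ℝ × ℝ) R := by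
    intro γ hγ
    rw [mem_closedBall_zero_iff, Prod.norm_def]
    refine max_le ?_ (by simpa using hR)
    simpa [abs_of_nonneg hγ.1] using hγ.2
  refine ⟨fun γ t => (α (γ, 0) t).1, fun γ t => (α (γ, 0) t).2, ?_, fun γ hγ => ?_⟩
  · have h1 := (hL' a ⟨by linarith, by linarith⟩).continuousOn.comp
      (by fun_prop : ContinuousOn (fun γ : ℝ => ((γ, 0) : ℝ × ℝ)) (Icc 0 R)) hmem
    exact continuous_fst.comp_continuousOn h1
  · obtain ⟨h0, hd⟩ := hα _ (hmem γ hγ)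
    refine ⟨by simp [h0], by simp [h0], fun t ht => ?_⟩
    have h1 := (hd t ⟨by linarith [ht.1], by linarith [ht.2]⟩).hasDerivAt
      (Icc_mem_nhds (by linarith [ht.1]) (by linarith [ht.2]))
    exact ⟨h1.fst, h1.snd⟩

/-- On `[a, b]`, the function `w` with derivative `y` is a nondecreasing solution of
`w'' = G r (w' / r) (-(w⁺) ^ p)` with `w b = γ`, `w' b = 0`. -/
structure IsShot (G : ℝ → ℝ → ℝ → ℝ) (p a b γ : ℝ) (w y : ℝ → ℝ) : Prop where
  apply_right : w b = γ
  deriv_right : y b = 0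
  nonneg : ∀ t ∈ Icc a b, 0 ≤ y t
  le : ∀ t ∈ Icc a b, w t ≤ γ
  hasDerivAt : ∀ t ∈ Icc a b, HasDerivAt w (y t) t
  hasDerivAt' : ∀ t ∈ Icc a b, HasDerivAt y (G t (y t / t) (-(max 0 (w t) ^ p))) t

/-- Backward Gronwall estimate. -/
theorem le_of_deriv_ge {y y' : ℝ → ℝ} {a b C K : ℝ} (hC : 0 ≤ C) (hK : 0 < K)
    (hy : ∀ t ∈ Icc a b, HasDerivAt y (y' t) t) (hb : y b = 0)
    (h : ∀ t ∈ Icc a b, -(C + K * y t) ≤ y' t) :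
    ∀ t ∈ Icc a b, y t ≤ C / K * Real.exp (K * (b - a)) := by
  intro t ht
  have hd : ∀ s ∈ Icc t b, HasDerivAt (fun s => (y s + C / K) * Real.exp (K * s))
      ((y' s + (K * y s + C)) * Real.exp (K * s)) s := by
    intro s hs
    have h1 := (hy s ⟨ht.1.trans hs.1, hs.2⟩).add_const (C / K)
    have h2 : HasDerivAt (fun s => Real.exp (K * s)) (Real.exp (K * s) * K) s := by
      simpa using ((hasDerivAt_id s).const_mul K).exp
    exact (h1.mul h2).congr_deriv (by field_simp)
  obtain ⟨c, hc, hcc⟩ := exists_sub_eq_deriv_mul ht.2 hd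
  have h1 : 0 ≤ (y' c + (K * y c + C)) * Real.exp (K * c) * (b - t) := by
    have := h c ⟨ht.1.trans hc.1, hc.2⟩
    have : 0 ≤ b - t := sub_nonneg.2 ht.2
    have : 0 ≤ y' c + (K * y c + C) := by linarith
    positivity
  rw [← hcc, hb, zero_add, sub_nonneg] at h1
  have h2 : y t + C / K ≤ C / K * Real.exp (K * (b - t)) := by
    rw [mul_sub, Real.exp_sub, ← mul_div_assoc, le_div_iff₀ (Real.exp_pos _)]
    exact h1
  have h3 : C / K * Real.exp (K * (b - t)) ≤ C / K * Real.exp (K * (b - a)) := by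
    gcongr
    exact ht.1
  have : 0 ≤ C / K := by positivity
  linarith

namespace IsResolvent

variable {G : ℝ → ℝ → ℝ → ℝ} {A B D : ℝ}

theorem nonpos (hG : IsResolvent G A B D) (hD : 0 ≤ D) {r : ℝ} (hr : 0 < r) {l c : ℝ}
    (hl : 0 ≤ l) (hc : c ≤ 0) : G r l c ≤ 0 :=
  (hG.le_mul r hr l c hl hc).trans (mul_nonpos_of_nonneg_of_nonpos hD hc)

theorem lower_bound (hG : IsResolvent G A B D) (hA : 0 ≤ A) (hB : 0 ≤ B) {a t z y c C : ℝ}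
    (ha : 0 < a) (hat : a ≤ t) (hz : 0 ≤ z) (hzy : z ≤ y) (hc : 0 ≤ c) (hcC : c ≤ C) :
    -(A * C + (B / a + 1) * y) ≤ G t (z / t) (-c) := by
  have ht : 0 < t := ha.trans_le hat
  have h1 := (abs_le.1 (hG.abs_apply_le ht (z / t) (-c))).1
  rw [abs_neg, abs_of_nonneg hc, abs_of_nonneg (by positivity)] at h1
  have h2 : z / t ≤ y / a := by gcongr; exact hz.trans hzy
  have h3 : B * (z / t) ≤ B * (y / a) := by gcongr
  have h4 : A * c ≤ A * C := by gcongr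
  have h5 : B * (y / a) = B / a * y := by ring
  linarith

theorem exists_isShot (hG : IsResolvent G A B D) (hA : 0 ≤ A) (hB : 0 ≤ B) (hD : 0 ≤ D)
    {p : ℝ} (hp : 1 < p) {a b : ℝ} (ha : 0 < a) (hab : a < b) {R : ℝ} (hR : 0 ≤ R) :
    ∃ W Y : ℝ → ℝ → ℝ, ContinuousOn (fun γ => W γ a) (Icc 0 R) ∧
      ∀ γ ∈ Icc 0 R, IsShot G p a b γ (W γ) (Y γ) := by
  set K := B / a + 1 with hK
  have hK0 : 0 < K := by positivity
  set M := A * R ^ p / K * Real.exp (K * (b - a)) with hM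
  have hM0 : 0 ≤ M := by positivity
  obtain ⟨W, Y, hcont, hsol⟩ := hG.exists_truncated_flow hA hB hp ha hab hR hM0
  refine ⟨W, Y, hcont, fun γ hγ => ?_⟩
  obtain ⟨hWb, hYb, hd⟩ := hsol γ hγ
  have hpow : ∀ t, 0 ≤ truncate R (W γ t) ^ p := fun t =>
    Real.rpow_nonneg (truncate_nonneg _ _) _
  have hY0 : ∀ t ∈ Icc a b, 0 ≤ Y γ t := by
    intro t ht
    obtain ⟨c, hc, h⟩ := exists_sub_eq_deriv_mul ht.2
      fun s hs => (hd s ⟨ht.1.trans hs.1, hs.2⟩).2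
    have hcpos : 0 < c := ha.trans_le (ht.1.trans hc.1)
    have h1 := hG.nonpos hD hcpos (div_nonneg (truncate_nonneg M (Y γ c)) hcpos.le)
      (neg_nonpos.2 (hpow c))
    have := mul_nonpos_of_nonpos_of_nonneg h1 (sub_nonneg.2 ht.2)
    linarith
  have hYM : ∀ t ∈ Icc a b, Y γ t ≤ M := by
    refine le_of_deriv_ge (by positivity) hK0 (fun t ht => (hd t ht).2) hYb fun t ht => ?_
    refine hG.lower_bound hA hB ha ht.1 (truncate_nonneg _ _) ?_ (hpow t) ?_
    · exact max_le (hY0 t ht) (min_le_right _ _)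
    · exact Real.rpow_le_rpow (truncate_nonneg _ _) (truncate_le hR _) (by linarith)
  have hWγ : ∀ t ∈ Icc a b, W γ t ≤ γ := by
    intro t ht
    obtain ⟨c, hc, h⟩ := exists_sub_eq_deriv_mul ht.2
      fun s hs => (hd s ⟨ht.1.trans hs.1, hs.2⟩).1
    have := mul_nonneg (truncate_nonneg M (Y γ c)) (sub_nonneg.2 ht.2)
    linarith
  have hYt : ∀ t ∈ Icc a b, truncate M (Y γ t) = Y γ t := fun t ht => by
    rw [truncate_of_le (hYM t ht), max_eq_right (hY0 t ht)]
  refine ⟨hWb, hYb, hY0, hWγ, fun t ht => ?_, fun t ht => ?_⟩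
  · have := (hd t ht).1
    rwa [hYt t ht] at this
  · have := (hd t ht).2
    rwa [hYt t ht, truncate_of_le ((hWγ t ht).trans hγ.2)] at this

end IsResolvent

namespace IsShot

variable {G : ℝ → ℝ → ℝ → ℝ} {A B D p a b γ : ℝ} {w y : ℝ → ℝ}

theorem antitoneOn (h : IsShot G p a b γ w y) (hG : IsResolvent G A B D) (hD : 0 ≤ D)
    (ha : 0 < a) : AntitoneOn y (Icc a b) := by
  intro s hs t ht hst
  obtain ⟨c, hc, hcc⟩ := exists_sub_eq_deriv_mul hst
    fun u hu => h.hasDerivAt' u ⟨hs.1.trans hu.1, hu.2.trans ht.2⟩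
  have hcm : c ∈ Icc a b := ⟨hs.1.trans hc.1, hc.2.trans ht.2⟩
  have hcpos : 0 < c := ha.trans_le hcm.1
  have h1 := hG.nonpos hD hcpos (div_nonneg (h.nonneg c hcm) hcpos.le)
    (neg_nonpos.2 (Real.rpow_nonneg (le_max_left 0 (w c)) p))
  have := mul_nonpos_of_nonpos_of_nonneg h1 (sub_nonneg.2 hst)
  linarith

theorem deriv_le (h : IsShot G p a b γ w y) (hG : IsResolvent G A B D) (hA : 0 ≤ A) (hB : 0 ≤ B)
    (hp : 1 < p) (hγ : 0 ≤ γ) (ha : 0 < a) :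
    ∀ t ∈ Icc a b, y t ≤ A * γ ^ p / (B / a + 1) * Real.exp ((B / a + 1) * (b - a)) := by
  refine le_of_deriv_ge (by positivity) (by positivity) h.hasDerivAt' h.deriv_right fun t ht => ?_
  refine hG.lower_bound hA hB ha ht.1 (h.nonneg t ht) le_rfl
    (Real.rpow_nonneg (le_max_left _ _) _) ?_
  exact Real.rpow_le_rpow (le_max_left _ _) (max_le hγ (h.le t ht)) (by linarith)

/-- A shot lies above its chord. -/
theorem chord_le (h : IsShot G p a b γ w y) (hG : IsResolvent G A B D) (hD : 0 ≤ D)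
    (ha : 0 < a) {t : ℝ} (ht : t ∈ Icc a b) :
    (t - a) * γ + (b - t) * w a ≤ (b - a) * w t := by
  have hy := h.antitoneOn hG hD ha
  obtain ⟨c, hc, hcc⟩ := exists_sub_eq_deriv_mul ht.1
    fun u hu => h.hasDerivAt u ⟨hu.1, hu.2.trans ht.2⟩
  obtain ⟨d, hd, hdd⟩ := exists_sub_eq_deriv_mul ht.2
    fun u hu => h.hasDerivAt u ⟨ht.1.trans hu.1, hu.2⟩
  have hcd := hy ⟨hc.1, hc.2.trans ht.2⟩ ⟨ht.1.trans hd.1, hd.2⟩ (hc.2.trans hd.1)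
  rw [h.apply_right] at hdd
  have h1 : 0 ≤ (y c - y d) * ((t - a) * (b - t)) :=
    mul_nonneg (sub_nonneg.2 hcd) (mul_nonneg (sub_nonneg.2 ht.1) (sub_nonneg.2 ht.2))
  have h2 : (b - t) * (w t - w a) = (b - t) * (y c * (t - a)) := by rw [hcc]
  have h3 : (t - a) * (γ - w t) = (t - a) * (y d * (b - t)) := by rw [hdd]
  linarith

/-- A shot that stays nonnegative cannot start too high. -/
theorem mul_rpow_le (h : IsShot G p a b γ w y) (hG : IsResolvent G A B D) (hD : 0 ≤ D)
    (hp : 1 < p) (ha : 0 < a) (hab : a < b) (hγ : 0 ≤ γ) (hwa : 0 ≤ w a) :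
    D * (γ / 2) ^ p * ((b - a) / 2) ^ 2 ≤ γ := by
  have hm : (a + b) / 2 ∈ Icc a b := ⟨by linarith, by linarith⟩
  have hy := h.antitoneOn hG hD ha
  obtain ⟨c, hc, hcc⟩ := exists_sub_eq_deriv_mul hm.1
    fun u hu => h.hasDerivAt u ⟨hu.1, hu.2.trans hm.2⟩
  obtain ⟨d, hd, hdd⟩ := exists_sub_eq_deriv_mul hm.2
    fun u hu => h.hasDerivAt' u ⟨hm.1.trans hu.1, hu.2⟩
  have hdm : d ∈ Icc a b := ⟨hm.1.trans hd.1, hd.2⟩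
  have hwd : γ / 2 ≤ w d := by
    have h1 := h.chord_le hG hD ha hdm
    have h2 : 0 ≤ (b - d) * w a := mul_nonneg (sub_nonneg.2 hd.2) hwa
    have h3 : 0 ≤ (d - (a + b) / 2) * γ := mul_nonneg (sub_nonneg.2 hd.1) hγ
    refine le_of_mul_le_mul_left ?_ (sub_pos.2 hab)
    linarith
  have hdpos : 0 < d := ha.trans_le hdm.1
  have hpow : (γ / 2) ^ p ≤ max 0 (w d) ^ p :=
    Real.rpow_le_rpow (by positivity) (le_max_of_le_right hwd) (by linarith)
  have h1 := hG.le_mul d hdpos (y d / d) (-(max 0 (w d) ^ p))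
    (div_nonneg (h.nonneg d hdm) hdpos.le)
    (neg_nonpos.2 (Real.rpow_nonneg (le_max_left _ _) _))
  have h2 : D * (γ / 2) ^ p ≤ -G d (y d / d) (-(max 0 (w d) ^ p)) := by
    have := mul_le_mul_of_nonneg_left hpow hD
    linarith
  have hhalf : 0 < (b - a) / 2 := by linarith
  have h3 : D * (γ / 2) ^ p * ((b - a) / 2) ≤ y c := by
    have h4 := mul_le_mul_of_nonneg_right h2 hhalf.le
    have h5 := hy ⟨hc.1, hc.2.trans hm.2⟩ hm hc.2
    rw [h.deriv_right, show b - (a + b) / 2 = (b - a) / 2 by ring] at hdd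
    linarith
  have h6 := mul_le_mul_of_nonneg_right h3 hhalf.le
  have h7 := h.le _ hm
  rw [show (a + b) / 2 - a = (b - a) / 2 by ring] at hcc
  calc D * (γ / 2) ^ p * ((b - a) / 2) ^ 2
      = D * (γ / 2) ^ p * ((b - a) / 2) * ((b - a) / 2) := by ring
    _ ≤ γ := by linarith

end IsShot

theorem exists_rpow_eq_mul {p : ℝ} (hp : 1 < p) {X : ℝ} (hX : 0 < X) :
    ∃ γ > 0, γ ^ p = X * γ := by
  have h : 0 < p - 1 := sub_pos.2 hp
  refine ⟨X ^ (p - 1)⁻¹, by positivity, ?_⟩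
  have h1 : (X ^ (p - 1)⁻¹) ^ (p - 1) = X := Real.rpow_inv_rpow hX.le h.ne'
  calc (X ^ (p - 1)⁻¹) ^ p = (X ^ (p - 1)⁻¹) ^ (p - 1 + 1) := by rw [sub_add_cancel]
    _ = X * X ^ (p - 1)⁻¹ := by rw [Real.rpow_add_one (by positivity), h1]

theorem IsResolvent.exists_shot_vanishing {G : ℝ → ℝ → ℝ → ℝ} {A B D : ℝ}
    (hG : IsResolvent G A B D) (hA : 0 < A) (hB : 0 ≤ B) (hD : 0 < D) {p : ℝ} (hp : 1 < p)
    {a b : ℝ} (ha : 0 < a) (hab : a < b) :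
    ∃ γ > 0, ∃ w y, IsShot G p a b γ w y ∧ w a = 0 := by
  have hba : 0 < b - a := sub_pos.2 hab
  set C := A / (B / a + 1) * Real.exp ((B / a + 1) * (b - a)) with hC
  have hC0 : 0 < C := by positivity
  obtain ⟨γ₀, hγ₀, h₀⟩ := exists_rpow_eq_mul hp (X := 1 / (2 * (b - a) * C)) (by positivity)
  obtain ⟨δ, hδ, h₁⟩ := exists_rpow_eq_mul hp (X := 4 / (D * ((b - a) / 2) ^ 2)) (by positivity)
  have hR : 0 ≤ max γ₀ (2 * δ) := le_max_of_le_left hγ₀.le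
  obtain ⟨W, Y, hcont, hshot⟩ := hG.exists_isShot hA.le hB hD.le hp ha hab hR
  have hsmall : 0 ≤ W γ₀ a := by
    have hs := hshot γ₀ ⟨hγ₀.le, le_max_left _ _⟩
    obtain ⟨c, hc, hcc⟩ := exists_sub_eq_deriv_mul hab.le hs.hasDerivAt
    have h2 := hs.deriv_le hG hA.le hB hp hγ₀.le ha c hc
    have h3 : A * γ₀ ^ p / (B / a + 1) * Real.exp ((B / a + 1) * (b - a)) = C * γ₀ ^ p := by
      rw [hC]; ring
    have h4 : C * γ₀ ^ p * (b - a) = γ₀ / 2 := by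
      rw [h₀]; field_simp
    rw [h3] at h2
    have h5 := mul_le_mul_of_nonneg_right h2 hba.le
    rw [hs.apply_right] at hcc
    linarith
  have hlarge : W (2 * δ) a ≤ 0 := by
    by_contra! hpos
    have hs := hshot (2 * δ) ⟨by positivity, le_max_right _ _⟩
    have h2 := hs.mul_rpow_le hG hD.le hp ha hab (by positivity) hpos.le
    rw [mul_div_cancel_left₀ _ (two_ne_zero), h₁] at h2
    have h3 : D * (4 / (D * ((b - a) / 2) ^ 2) * δ) * ((b - a) / 2) ^ 2 = 4 * δ := by
      field_simp
    linarith
  have hsub : uIcc (2 * δ) γ₀ ⊆ Icc 0 (max γ₀ (2 * δ)) := by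
    intro x hx
    rw [uIcc, mem_Icc] at hx
    exact ⟨(le_min (by positivity) hγ₀.le).trans hx.1, by rw [max_comm]; exact hx.2⟩
  obtain ⟨γ, hγ, h0⟩ := intermediate_value_uIcc (hcont.mono hsub)
    (Icc_subset_uIcc ⟨hlarge, hsmall⟩)
  rw [uIcc, mem_Icc] at hγ
  exact ⟨γ, (lt_min (by positivity) hγ₀).trans_le hγ.1, W γ, Y γ,
    hshot γ (hsub (by rwa [uIcc, mem_Icc])), h0⟩

theorem UnifElliptic.exists_pos_solution {n : ℕ} {lam Lam : ℝ} {F : ℝ → ℝ → ℝ → ℝ}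
    (h : UnifElliptic n lam Lam F) (hn : 2 ≤ n) (hlam : 0 < lam) (hlL : lam ≤ Lam)
    (hF : Continuous fun x : ℝ × ℝ × ℝ => F x.1 x.2.1 x.2.2) (hF0 : ∀ r, F r 0 0 = 0)
    {p : ℝ} (hp : 1 < p) {a b : ℝ} (ha : 0 < a) (hab : a < b) :
    ∃ w w' w'' : ℝ → ℝ,
      (∀ r ∈ Icc a b, HasDerivAt w (w' r) r) ∧
      (∀ r ∈ Icc a b, HasDerivAt w' (w'' r) r) ∧
      ContinuousOn w'' (Icc a b) ∧
      w a = 0 ∧ w' b = 0 ∧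
      (∀ r ∈ Ioc a b, 0 < w r) ∧
      (∀ r ∈ Ioo a b, -F r (w'' r) (w' r / r) = w r ^ p) := by
  obtain ⟨G, A, B, D, hA, hB, hD, hG, hFG⟩ := h.exists_isResolvent hn hlam hlL hF hF0
  obtain ⟨γ, hγ, w, y, hs, h0⟩ := hG.exists_shot_vanishing hA hB hD hp ha hab
  have hpos : ∀ r ∈ Ioc a b, 0 < w r := by
    intro r hr
    have h1 := hs.chord_le hG hD.le ha (Ioc_subset_Icc_self hr)
    have h2 : 0 < (r - a) * γ := mul_pos (sub_pos.2 hr.1) hγ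
    rw [h0, mul_zero, add_zero] at h1
    exact pos_of_mul_pos_right (h2.trans_le h1) (sub_pos.2 hab).le
  refine ⟨w, y, fun r => G r (y r / r) (-(max 0 (w r) ^ p)), hs.hasDerivAt, hs.hasDerivAt', ?_,
    h0, hs.deriv_right, hpos, fun r hr => ?_⟩
  · intro r hr
    have hr0 : 0 < r := ha.trans_le hr.1
    have hw := (hs.hasDerivAt r hr).continuousAt.continuousWithinAt (s := Icc a b)
    have hy := (hs.hasDerivAt' r hr).continuousAt.continuousWithinAt (s := Icc a b)
    have h1 : ContinuousWithinAt (fun r => (r, y r / r, -(max 0 (w r) ^ p))) (Icc a b) r :=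
      continuousWithinAt_id.prodMk ((hy.div continuousWithinAt_id hr0.ne').prodMk
        ((continuousWithinAt_const.max hw).rpow_const (Or.inr (by linarith))).neg)
    exact (hG.continuousOn _ (show 0 < r from hr0)).comp h1 fun s hs' =>
      show 0 < s from ha.trans_le hs'.1
  · simp only
    rw [hFG r (ha.trans hr.1), neg_neg, max_eq_right (hpos r (Ioo_subset_Ioc_self hr)).le]

/-- Theorem (mixed boundary value problem, Dirichlet at `|x| = a`, Neumann at `|x| = b`):
`F(x,D²u) + |u|^{p−1}u = 0` in `A_{a,b}`, `u = 0` on `|x| = a`, `∂u/∂n = 0` on `|x| = b`,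
has a positive and a negative radial solution. -/
theorem mixed_bvp_dirichlet_neumann_annulus
    (n : ℕ) (hn : 2 ≤ n) (lam Lam p : ℝ) (hlam : 0 < lam) (hlL : lam ≤ Lam) (hp : 1 < p)
    (F : ℝ → ℝ → ℝ → ℝ)
    (hFcont : Continuous fun x : ℝ × ℝ × ℝ => F x.1 x.2.1 x.2.2)
    (hF0 : ∀ r : ℝ, F r 0 0 = 0)
    (hFell : UnifElliptic n lam Lam F)
    (a b : ℝ) (ha : 0 < a) (hab : a < b) :
    (∃ w w' w'' : ℝ → ℝ,
      (∀ r ∈ Icc a b, HasDerivAt w (w' r) r) ∧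
      (∀ r ∈ Icc a b, HasDerivAt w' (w'' r) r) ∧
      ContinuousOn w'' (Icc a b) ∧
      w a = 0 ∧ w' b = 0 ∧
      (∀ r ∈ Ioc a b, 0 < w r) ∧
      (∀ r ∈ Ioo a b, -F r (w'' r) (w' r / r) = w r ^ p)) ∧
    (∃ w w' w'' : ℝ → ℝ,
      (∀ r ∈ Icc a b, HasDerivAt w (w' r) r) ∧
      (∀ r ∈ Icc a b, HasDerivAt w' (w'' r) r) ∧
      ContinuousOn w'' (Icc a b) ∧
      w a = 0 ∧ w' b = 0 ∧
      (∀ r ∈ Ioc a b, w r < 0) ∧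
      (∀ r ∈ Ioo a b, -F r (w'' r) (w' r / r) = -(|w r| ^ p))) := by
  refine ⟨hFell.exists_pos_solution hn hlam hlL hFcont hF0 hp ha hab, ?_⟩
  obtain ⟨w, w', w'', hw, hw', hc, h0, hb, hpos, heq⟩ :=
    hFell.neg_reflect.exists_pos_solution hn hlam hlL
      (hFcont.comp (by fun_prop :
        Continuous fun x : ℝ × ℝ × ℝ => (x.1, -x.2.1, -x.2.2))).neg
      (fun r => by simp [hF0]) hp ha hab
  refine ⟨fun r => -w r, fun r => -w' r, fun r => -w'' r, fun r hr => (hw r hr).neg,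
    fun r hr => (hw' r hr).neg, hc.neg, by simp [h0], by simp [hb],
    fun r hr => neg_lt_zero.2 (hpos r hr), fun r hr => ?_⟩
  have h1 := heq r hr
  have h2 := hpos r (Ioo_subset_Ioc_self hr)
  simp only [neg_neg] at h1
  simp only
  rw [abs_neg, abs_of_pos h2, neg_div, h1]
end

section
/- For every rising radial arc (u, a, τ) with slope α > 0, one has τ^{p+1+2(ñ−1)} ≥ (λ(p+1)/2)·a^{2(ñ−1)}/α^{p−1}. (In particular τ(α) → +∞ as α → 0⁺.) -/
open Real Set

/-- `u` satisfies the Pucci differential inequalities at `r`: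
`−P⁺[u](r) ≤ |u(r)|^{p−1}u(r) ≤ −P⁻[u](r)`. -/
def PucciIneq (n : ℕ) (lam Lam p : ℝ) (u u' u'' : ℝ → ℝ) (r : ℝ) : Prop :=
  -Pp n lam Lam u' u'' r ≤ |u r| ^ (p - 1) * u r ∧
    |u r| ^ (p - 1) * u r ≤ -Pm n lam Lam u' u'' r

/-- A rising radial arc with slope `α`: `u ∈ C²([a,τ])`, `u(a) = 0`, `u'(a) = α > 0`,
`u > 0` on `(a,τ]`, `u' > 0` on `[a,τ)`, `u'(τ) = 0`, and `u` satisfies the Pucci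
differential inequalities on `(a,τ)`. -/
def RisingArc (n : ℕ) (lam Lam p : ℝ) (u u' u'' : ℝ → ℝ) (a τ α : ℝ) : Prop :=
  0 < a ∧ a < τ ∧ 0 < α ∧
  (∀ r ∈ Set.Icc a τ, HasDerivAt u (u' r) r) ∧
  (∀ r ∈ Set.Icc a τ, HasDerivAt u' (u'' r) r) ∧
  ContinuousOn u'' (Set.Icc a τ) ∧
  u a = 0 ∧ u' a = α ∧
  (∀ r ∈ Set.Ioc a τ, 0 < u r) ∧
  (∀ r ∈ Set.Ico a τ, 0 < u' r) ∧
  u' τ = 0 ∧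
  (∀ r ∈ Set.Ioo a τ, PucciIneq n lam Lam p u u' u'' r)

/-- Along the increasing part of a positive solution of the Pucci differential inequalities,
`u` is strictly concave and satisfies the one-sided equation of the operator `𝓜⁺`. -/
lemma PucciIneq.second_deriv_bounds {n : ℕ} {lam Lam p : ℝ} {u u' u'' : ℝ → ℝ} {r : ℝ}
    (hn : 1 ≤ n) (hlam : 0 < lam) (hr : 0 < r) (hu : 0 < u r) (hu' : 0 < u' r)
    (h : PucciIneq n lam Lam p u u' u'' r) :
    u'' r < 0 ∧ -(u r ^ p) ≤ lam * u'' r + Lam * ((n : ℝ) - 1) * (u' r / r) := by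
  obtain ⟨h1, h2⟩ := h
  have hq : 0 < u' r / r := div_pos hu' hr
  have hpow : |u r| ^ (p - 1) * u r = u r ^ p := by
    rw [abs_of_pos hu, ← Real.rpow_add_one hu.ne', sub_add_cancel]
  have hpos : 0 < u r ^ p := Real.rpow_pos_of_pos hu p
  have hn' : (0 : ℝ) ≤ (n : ℝ) - 1 := sub_nonneg.2 (by exact_mod_cast hn)
  rw [hpow] at h1 h2
  simp only [Pp, Pm, max_eq_left hq.le, min_eq_right hq.le] at h1 h2
  have hneg : u'' r < 0 := by
    by_contra! hc
    rw [max_eq_left hc, min_eq_right hc] at h2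
    have e1 : 0 ≤ lam * u'' r := by positivity
    have e2 : 0 ≤ ((n : ℝ) - 1) * (lam * (u' r / r)) := by positivity
    linarith
  refine ⟨hneg, ?_⟩
  rw [max_eq_right hneg.le, min_eq_left hneg.le] at h1
  linarith

/-- A function with antitone derivative lies below its tangent at the left endpoint. -/
lemma sub_le_deriv_mul_sub_of_second_deriv_nonpos {u u' u'' : ℝ → ℝ} {a b : ℝ} (hab : a ≤ b)
    (hu : ∀ r ∈ Icc a b, HasDerivAt u (u' r) r) (hu' : ∀ r ∈ Icc a b, HasDerivAt u' (u'' r) r)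
    (hneg : ∀ r ∈ Ioo a b, u'' r ≤ 0) : u b - u a ≤ u' a * (b - a) := by
  have hanti : AntitoneOn u' (Icc a b) := by
    refine antitoneOn_of_hasDerivWithinAt_nonpos (f' := u'') (convex_Icc a b)
      (fun r hr => (hu' r hr).continuousAt.continuousWithinAt) ?_ ?_
    · intro r hr
      exact (hu' r (interior_subset hr)).hasDerivWithinAt
    · rw [interior_Icc]
      exact hneg
  refine (convex_Icc a b).image_sub_le_mul_sub_of_deriv_le
    (fun r hr => (hu r hr).continuousAt.continuousWithinAt)
    (fun r hr => (hu r (interior_subset hr)).differentiableAt.differentiableWithinAt) ?_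
    a (left_mem_Icc.2 hab) b (right_mem_Icc.2 hab) hab
  intro r hr
  have hr' := interior_subset hr
  rw [(hu r hr').deriv]
  exact hanti (left_mem_Icc.2 hab) hr' hr'.1

/-- Energy estimate: if `lam * (u'' + N u' / r) ≥ -u ^ p` along an increasing arc ending at a
critical point, then the weighted initial kinetic energy is controlled by the final potential. -/
lemma weighted_energy_le {lam p N a τ : ℝ} {u u' u'' : ℝ → ℝ} (hp : 0 < p)
    (hN : 0 ≤ N) (ha : 0 < a) (hab : a < τ)
    (hu : ∀ r ∈ Icc a τ, HasDerivAt u (u' r) r) (hu' : ∀ r ∈ Icc a τ, HasDerivAt u' (u'' r) r)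
    (hua : u a = 0) (hpos : ∀ r ∈ Ioo a τ, 0 < u r) (hpos' : ∀ r ∈ Ioo a τ, 0 < u' r)
    (hend : u' τ = 0)
    (hode : ∀ r ∈ Ioo a τ, -(u r ^ p) ≤ lam * (u'' r + N * (u' r / r))) :
    lam * (p + 1) / 2 * (a ^ (2 * N) * u' a ^ 2) ≤ τ ^ (2 * N) * u τ ^ (p + 1) := by
  set F : ℝ → ℝ := fun r =>
    lam * (p + 1) / 2 * (r ^ (2 * N) * u' r ^ 2) + τ ^ (2 * N) * u r ^ (p + 1) with hF
  have hder : ∀ r ∈ Icc a τ, HasDerivAt F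
      (lam * (p + 1) / 2 * (2 * N * r ^ (2 * N - 1) * u' r ^ 2
        + r ^ (2 * N) * (2 * u' r * u'' r)) +
        τ ^ (2 * N) * (u' r * (p + 1) * u r ^ p)) r := by
    intro r hr
    have hr0 : r ≠ 0 := (ha.trans_le hr.1).ne'
    have h1 := Real.hasDerivAt_rpow_const (p := 2 * N) (Or.inl hr0)
    have h2 := (hu' r hr).pow 2
    have h3 := (hu r hr).rpow_const (p := p + 1) (Or.inr (by linarith))
    have h4 := ((h1.mul h2).const_mul (lam * (p + 1) / 2)).add (h3.const_mul (τ ^ (2 * N)))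
    refine HasDerivAt.congr_deriv (f := F) h4 ?_
    simp
  have hmono : MonotoneOn F (Icc a τ) := by
    refine monotoneOn_of_hasDerivWithinAt_nonneg (convex_Icc a τ)
      (fun r hr => (hder r hr).continuousAt.continuousWithinAt)
      (fun r hr => (hder r (interior_subset hr)).hasDerivWithinAt) ?_
    rw [interior_Icc]
    intro r hr
    have hr0 : 0 < r := ha.trans hr.1
    have hup := hpos r hr
    have hup' := hpos' r hr
    have hrN : 0 < r ^ (2 * N) := Real.rpow_pos_of_pos hr0 _
    have hle : r ^ (2 * N) ≤ τ ^ (2 * N) :=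
      Real.rpow_le_rpow hr0.le hr.2.le (by positivity)
    have hU : 0 < u r ^ p := Real.rpow_pos_of_pos hup p
    have key : 0 ≤ r ^ (2 * N) * (lam * (u'' r + N * (u' r / r))) + τ ^ (2 * N) * u r ^ p := by
      have e1 := mul_le_mul_of_nonneg_left (hode r hr) hrN.le
      have e2 := mul_le_mul_of_nonneg_right hle hU.le
      linarith
    have := mul_nonneg (mul_nonneg (by linarith : 0 ≤ p + 1) hup'.le) key
    rw [Real.rpow_sub_one hr0.ne']
    refine this.trans_eq ?_
    field_simp
    ring
  have h := hmono (left_mem_Icc.2 hab.le) (right_mem_Icc.2 hab.le) hab.le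
  simpa [hF, hua, hend, Real.zero_rpow (by linarith : p + 1 ≠ 0)] using h

/-- Lemma 3.1 (iv) (paper), quantitative form:
`τ^{p+1+2(ñ₋−1)} ≥ (λ(p+1)/2) a^{2(ñ₋−1)} / α^{p−1}` for any rising radial arc. -/
theorem rising_arc_peak_location_lower_bound
    (n : ℕ) (hn : 2 ≤ n) (lam Lam p ntil : ℝ) (hlam : 0 < lam) (hlL : lam ≤ Lam) (hp : 1 < p)
    (hnt : ntil = Lam / lam * ((n : ℝ) - 1) + 1)
    (a τ α : ℝ) (u u' u'' : ℝ → ℝ)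
    (harc : RisingArc n lam Lam p u u' u'' a τ α) :
    lam * (p + 1) / 2 * a ^ (2 * (ntil - 1)) / α ^ (p - 1) ≤ τ ^ (p + 1 + 2 * (ntil - 1)) := by
  obtain ⟨ha, hab, hα, hu, hu', -, hua, hua', hpos, hpos', hend, hineq⟩ := harc
  have hb : ∀ r ∈ Ioo a τ, _ := fun r hr =>
    (hineq r hr).second_deriv_bounds (by omega) hlam (ha.trans hr.1) (hpos r ⟨hr.1, hr.2.le⟩)
      (hpos' r ⟨hr.1.le, hr.2⟩)
  set N := ntil - 1 with hNdef
  have hN : N = Lam / lam * ((n : ℝ) - 1) := by rw [hNdef, hnt]; ring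
  have hn1 : (0 : ℝ) ≤ (n : ℝ) - 1 := sub_nonneg.2 (by exact_mod_cast (by omega : 1 ≤ n))
  have hN0 : 0 ≤ N := by
    rw [hN]
    exact mul_nonneg (div_nonneg (hlam.le.trans hlL) hlam.le) hn1
  have hτ : 0 < τ := ha.trans hab
  have henergy := weighted_energy_le (p := p) (by linarith) hN0 ha hab hu hu' hua
    (fun r hr => hpos r ⟨hr.1, hr.2.le⟩) (fun r hr => hpos' r ⟨hr.1.le, hr.2⟩) hend
    (fun r hr => by
      refine (hb r hr).2.trans_eq ?_
      rw [hN]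
      field_simp)
  have htangent := sub_le_deriv_mul_sub_of_second_deriv_nonpos hab.le hu hu'
    (fun r hr => (hb r hr).1.le)
  rw [hua, hua', sub_zero] at htangent
  have huτ : u τ ≤ α * τ :=
    htangent.trans (mul_le_mul_of_nonneg_left (by linarith) hα.le)
  have hpow : u τ ^ (p + 1) ≤ α ^ (p - 1) * α ^ 2 * τ ^ (p + 1) := by
    refine (Real.rpow_le_rpow (hpos τ ⟨hab, le_rfl⟩).le huτ (by linarith)).trans_eq ?_
    rw [Real.mul_rpow hα.le hτ.le, ← Real.rpow_natCast α 2, ← Real.rpow_add hα]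
    congr 2
    push_cast
    ring
  rw [hua'] at henergy
  rw [div_le_iff₀ (Real.rpow_pos_of_pos hα _), Real.rpow_add hτ]
  refine le_of_mul_le_mul_right ?_ (pow_pos hα 2)
  have := mul_le_mul_of_nonneg_left hpow (Real.rpow_nonneg hτ.le (2 * N))
  linarith
end

section
/- Assume ñ > 2 and fix a > 0. For every ε > 0 there exists A > 0 with the following property: for every α ≥ A there is no twice continuously differentiable function u : [a, a+ε] → ℝ with u(a) = 0, u'(a) = α, u(r) > 0 for all r ∈ (a, a+ε], satisfying the Pucci differential inequalities at every r ∈ (a, a+ε). (Equivalently: for α large, the maximal positive solution of the Cauchy problem with initial slope α must return to zero at some ρ(α) ≤ a + ε; in particular ρ(α) < ∞ and ρ(α) → a as α → +∞.) -/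
open Real Set

theorem le_add_mul_of_hasDerivAt_le {f f' : ℝ → ℝ} {s t c : ℝ} (hst : s ≤ t)
    (hf : ∀ r ∈ Icc s t, HasDerivAt f (f' r) r) (h : ∀ r ∈ Ioo s t, f' r ≤ c) :
    f t ≤ f s + c * (t - s) := by
  rcases hst.eq_or_lt with rfl | hlt
  · simp
  obtain ⟨r, hr, e⟩ := exists_hasDerivAt_eq_slope f f' hlt
    (fun x hx => (hf x hx).continuousAt.continuousWithinAt)
    (fun x hx => hf x (Ioo_subset_Icc_self hx))
  have h1 := h r hr
  rw [e, div_le_iff₀ (sub_pos.2 hlt)] at h1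
  linarith

theorem add_mul_le_of_le_hasDerivAt {f f' : ℝ → ℝ} {s t c : ℝ} (hst : s ≤ t)
    (hf : ∀ r ∈ Icc s t, HasDerivAt f (f' r) r) (h : ∀ r ∈ Ioo s t, c ≤ f' r) :
    f s + c * (t - s) ≤ f t := by
  have := le_add_mul_of_hasDerivAt_le (f := fun r => -f r) (f' := fun r => -f' r) (c := -c) hst
    (fun r hr => (hf r hr).neg) (fun r hr => neg_le_neg (h r hr))
  linarith

/-- A function that decreases wherever it is positive stays nonpositive. -/
theorem nonpos_of_hasDerivAt_nonpos_of_pos {g g' : ℝ → ℝ} {τ b : ℝ}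
    (hg : ∀ r ∈ Icc τ b, HasDerivAt g (g' r) r) (h0 : g τ ≤ 0)
    (h : ∀ r ∈ Ioo τ b, 0 < g r → g' r ≤ 0) : ∀ r ∈ Icc τ b, g r ≤ 0 := by
  intro s hs
  by_contra! hpos
  have hcont : ContinuousOn g (Icc τ s) := fun x hx =>
    (hg x ⟨hx.1, hx.2.trans hs.2⟩).continuousAt.continuousWithinAt
  have hcpt : IsCompact (Icc τ s ∩ g ⁻¹' Iic 0) :=
    isCompact_Icc.of_isClosed_subset
      (hcont.preimage_isClosed_of_isClosed isClosed_Icc isClosed_Iic) inter_subset_left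
  obtain ⟨σ, ⟨hσ, hgσ⟩, hmax⟩ := hcpt.exists_isGreatest ⟨τ, ⟨le_rfl, hs.1⟩, h0⟩
  have := le_add_mul_of_hasDerivAt_le (c := 0) hσ.2
    (fun r hr => hg r ⟨hσ.1.trans hr.1, hr.2.trans hs.2⟩)
    (fun r hr => by
      refine h r ⟨hσ.1.trans_lt hr.1, hr.2.trans_le hs.2⟩ ?_
      by_contra! hn
      exact absurd (hmax ⟨⟨hσ.1.trans hr.1.le, hr.2.le⟩, hn⟩) (not_le.2 hr.1))
  simp only [mem_preimage, mem_Iic] at hgσ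
  linarith

/-- A decreasing function starting from a large maximum and subject to a strong superlinear
restoring force cannot remain positive for a time `3 * h`. -/
theorem nonpos_of_decay {u u' u'' : ℝ → ℝ} {D h b K τ : ℝ} (hh : 0 < h) (hD : 0 ≤ D)
    (hDh : 4 * (D * h) ≤ 1) (hb : b * (h * h) = 4 * (D * h + 3)) (hK : 0 < K)
    (hu : ∀ r ∈ Icc τ (τ + 3 * h), HasDerivAt u (u' r) r)
    (hu' : ∀ r ∈ Icc τ (τ + 3 * h), HasDerivAt u' (u'' r) r)
    (hneg : ∀ r ∈ Icc τ (τ + 3 * h), u' r ≤ 0) (h0 : u' τ = 0) (hm : 2 * K ≤ u τ)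
    (hode : ∀ r ∈ Ioo τ (τ + 3 * h), u'' r ≤ -D * u' r)
    (hode' : ∀ r ∈ Ioo τ (τ + 3 * h), K ≤ u r → u'' r ≤ -D * u' r - b * u r) :
    u (τ + 3 * h) ≤ 0 := by
  have hbpos : 0 < b := by
    by_contra! hb0
    nlinarith [mul_nonneg hD hh.le, mul_pos hh hh]
  have hanti : ∀ s t, τ ≤ s → s ≤ t → t ≤ τ + 3 * h → u t ≤ u s := by
    intro s t h1 h2 h3
    have := le_add_mul_of_hasDerivAt_le (f := u) (f' := u') (c := 0) h2
      (fun r hr => hu r ⟨h1.trans hr.1, hr.2.trans h3⟩)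
      (fun r hr => hneg r ⟨h1.trans hr.1.le, hr.2.le.trans h3⟩)
    linarith
  by_contra! hpos
  have hpos' : ∀ r ∈ Icc τ (τ + 3 * h), 0 < u r := fun r hr =>
    hpos.trans_le (hanti _ _ hr.1 hr.2 le_rfl)
  have hderiv : ∀ r ∈ Icc τ (τ + 3 * h),
      HasDerivAt (fun r => u' r + D * u r) (u'' r + D * u' r) r :=
    fun r hr => (hu' r hr).add ((hu r hr).const_mul D)
  have hhalf : u (τ + h) < u τ / 2 := by
    by_contra! hge
    have hlow : ∀ r ∈ Icc τ (τ + h), u τ / 2 ≤ u r := fun r hr =>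
      hge.trans (hanti _ _ hr.1 hr.2 (by linarith))
    have hspeed : ∀ r ∈ Ioo (τ + h / 2) (τ + h), u' r ≤ D * u τ - b * (u τ / 2) * (h / 2) := by
      intro r hr
      have h1 : τ ≤ r := by linarith [hr.1]
      have h2 := le_add_mul_of_hasDerivAt_le (c := -(b * (u τ / 2))) h1
        (fun x hx => hderiv x ⟨hx.1, by linarith [hx.2, hr.2]⟩)
        (fun x hx => by
          have hx' : u τ / 2 ≤ u x := hlow x ⟨hx.1.le, by linarith [hx.2, hr.2]⟩
          have := hode' x ⟨hx.1, by linarith [hx.2, hr.2]⟩ (by linarith)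
          have := mul_le_mul_of_nonneg_left hx' hbpos.le
          linarith)
      have h3 : 0 < u r := hpos' r ⟨h1, by linarith [hr.2]⟩
      have h4 : 0 ≤ D * u r := by positivity
      have h5 : 0 ≤ b * (u τ / 2) * (r - τ - h / 2) :=
        mul_nonneg (mul_nonneg hbpos.le (by linarith)) (by linarith [hr.1])
      simp only [h0] at h2
      linarith
    have h1 := le_add_mul_of_hasDerivAt_le (by linarith : τ + h / 2 ≤ τ + h)
      (fun r hr => hu r ⟨by linarith [hr.1], by linarith [hr.2]⟩) hspeed
    have h2 := hanti τ (τ + h / 2) le_rfl (by linarith) (by linarith)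
    have h3 : (D * u τ - b * (u τ / 2) * (h / 2)) * (τ + h - (τ + h / 2))
        = u τ * (D * h / 2 - b * (h * h) / 8) := by ring
    rw [h3, hb] at h1
    nlinarith
  obtain ⟨s, hs, hslope⟩ := exists_hasDerivAt_eq_slope u u' (by linarith : τ < τ + h)
    (fun x hx => (hu x ⟨hx.1, by linarith [hx.2]⟩).continuousAt.continuousWithinAt)
    (fun x hx => hu x ⟨hx.1.le, by linarith [hx.2]⟩)
  have hslope' : u' s * h = u (τ + h) - u τ := by
    rw [hslope, add_sub_cancel_left, div_mul_cancel₀ _ hh.ne']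
  have hspeed : ∀ r ∈ Ioo (τ + h) (τ + 3 * h), u' r ≤ -(u τ / (4 * h)) := by
    intro r hr
    have h1 : s ≤ r := by linarith [hr.1, hs.2]
    have h2 := le_add_mul_of_hasDerivAt_le (c := 0) h1
      (fun x hx => hderiv x ⟨hs.1.le.trans hx.1, by linarith [hx.2, hr.2]⟩)
      (fun x hx => by
        have := hode x ⟨hs.1.trans hx.1, by linarith [hx.2, hr.2]⟩
        linarith)
    have h3 : 0 ≤ D * u r := mul_nonneg hD (hpos' r ⟨hs.1.le.trans h1, hr.2.le⟩).le
    have h4 : D * u s ≤ D * u τ :=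
      mul_le_mul_of_nonneg_left (hanti τ s le_rfl hs.1.le (by linarith [hs.2])) hD
    have h5 : (u' s + D * u τ) * (4 * h) ≤ -u τ := by nlinarith
    have h6 : u' s + D * u τ ≤ -u τ / (4 * h) := by rwa [le_div_iff₀ (by positivity)]
    rw [neg_div] at h6
    linarith
  have h1 := le_add_mul_of_hasDerivAt_le (by linarith : τ + h ≤ τ + 3 * h)
    (fun r hr => hu r ⟨by linarith [hr.1], hr.2⟩) hspeed
  have h2 : -(u τ / (4 * h)) * (τ + 3 * h - (τ + h)) = -(u τ / 2) := by
    field_simp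
    ring
  linarith

/-- A function vanishing at `a`, concave while increasing, and subject to a strong superlinear
restoring force once it exceeds `K`, cannot be increasing for a time `2 * h` if it exceeds `K`
after time `h`. -/
theorem exists_deriv_neg_of_concave {u u' u'' : ℝ → ℝ} {h b K a : ℝ} (hh : 0 < h)
    (hb : 1 < b * (h * h)) (hK : 0 < K)
    (hu : ∀ r ∈ Icc a (a + 2 * h), HasDerivAt u (u' r) r)
    (hu' : ∀ r ∈ Icc a (a + 2 * h), HasDerivAt u' (u'' r) r)
    (h0 : u a = 0) (hm : K ≤ u (a + h))
    (hconc : ∀ r ∈ Ioo a (a + 2 * h), 0 ≤ u' r → u'' r ≤ 0)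
    (hode : ∀ r ∈ Ioo a (a + 2 * h), 0 ≤ u' r → K ≤ u r → u'' r ≤ -(b * u r)) :
    ∃ r ∈ Icc a (a + 2 * h), u' r < 0 := by
  by_contra! hnn
  have hbpos : 0 < b := by
    by_contra! hb0
    nlinarith [mul_pos hh hh]
  have hslope : ∀ r ∈ Ioo a (a + h), u' (a + h) ≤ u' r := by
    intro r hr
    have := le_add_mul_of_hasDerivAt_le (c := 0) hr.2.le
      (fun x hx => hu' x ⟨hr.1.le.trans hx.1, by linarith [hx.2]⟩)
      (fun x hx => by
        have h1 : a < x := hr.1.trans hx.1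
        have h2 : x < a + 2 * h := by linarith [hx.2]
        exact hconc x ⟨h1, h2⟩ (hnn x ⟨h1.le, h2.le⟩))
    linarith
  have h1 := add_mul_le_of_le_hasDerivAt (by linarith : a ≤ a + h)
    (fun r hr => hu r ⟨hr.1, by linarith [hr.2]⟩) hslope
  have hlow : ∀ r ∈ Icc (a + h) (a + 2 * h), u (a + h) ≤ u r := by
    intro r hr
    have := add_mul_le_of_le_hasDerivAt (c := 0) hr.1
      (fun x hx => hu x ⟨by linarith [hx.1], hx.2.trans hr.2⟩)
      (fun x hx => hnn x ⟨by linarith [hx.1], hx.2.le.trans hr.2⟩)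
    linarith
  have h2 := le_add_mul_of_hasDerivAt_le (c := -(b * u (a + h)))
    (by linarith : a + h ≤ a + 2 * h)
    (fun r hr => hu' r ⟨by linarith [hr.1], hr.2⟩)
    (fun r hr => by
      have h3 := hlow r ⟨hr.1.le, hr.2.le⟩
      have h4 : a < r := by linarith [hr.1]
      have := hode r ⟨h4, hr.2⟩ (hnn r ⟨h4.le, hr.2.le⟩) (hm.trans h3)
      have := mul_le_mul_of_nonneg_left h3 hbpos.le
      linarith)
  have h3 := hnn (a + 2 * h) ⟨by linarith, le_rfl⟩
  have h4 : 0 ≤ (u' (a + h) + -(b * u (a + h)) * h) * h :=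
    mul_nonneg (by linarith) hh.le
  have h5 : 0 < (b * (h * h) - 1) * u (a + h) := mul_pos (by linarith) (hK.trans_le hm)
  linarith

/-- While the solution increases, the Pucci inequalities bound its second derivative on
both sides. -/
theorem PucciIneq.of_deriv_nonneg {n : ℕ} {lam Lam p a r : ℝ} {u u' u'' : ℝ → ℝ}
    (h : PucciIneq n lam Lam p u u' u'' r) (hn : 1 ≤ n) (hlam : 0 < lam) (hlL : lam ≤ Lam)
    (ha : 0 < a) (har : a ≤ r) (hu : 0 < u r) (hx : 0 ≤ u' r) :
    u'' r ≤ -(u r ^ (p - 1) * u r / Lam) ∧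
      -(u r ^ (p - 1) * u r / lam) - ((n : ℝ) - 1) * Lam / (lam * a) * u' r ≤ u'' r := by
  obtain ⟨h1, h2⟩ := h
  have hn' : (0 : ℝ) ≤ (n : ℝ) - 1 := by
    have : (1 : ℝ) ≤ n := by exact_mod_cast hn
    linarith
  have hL : 0 < Lam := hlam.trans_le hlL
  have hr : 0 < r := ha.trans_le har
  rw [abs_of_pos hu] at h1 h2
  have hf : 0 < u r ^ (p - 1) * u r := by positivity
  set f := u r ^ (p - 1) * u r
  have hq : 0 ≤ u' r / r := by positivity
  have hqa : u' r / r ≤ u' r / a := div_le_div_of_nonneg_left hx ha har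
  unfold Pp at h1
  unfold Pm at h2
  rw [max_eq_left hq, min_eq_right hq] at h1 h2
  have hq1 : 0 ≤ ((n : ℝ) - 1) * (lam * (u' r / r) + Lam * 0) := by
    rw [mul_zero, add_zero]; positivity
  have hy : u'' r ≤ 0 := by
    by_contra! hy
    rw [max_eq_left hy.le, min_eq_right hy.le] at h2
    nlinarith [mul_pos hlam hy]
  rw [max_eq_right hy, min_eq_left hy] at h1 h2
  constructor
  · rw [← neg_div, le_div_iff₀ hL]
    linarith
  · have e : -(f / lam) - ((n : ℝ) - 1) * Lam / (lam * a) * u' r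
        = (-f - ((n : ℝ) - 1) * (Lam * (u' r / a))) / lam := by field_simp
    rw [e, div_le_iff₀ hlam]
    have : ((n : ℝ) - 1) * (Lam * (u' r / r)) ≤ ((n : ℝ) - 1) * (Lam * (u' r / a)) := by gcongr
    linarith

/-- While the solution decreases, the Pucci inequalities bound its second derivative above. -/
theorem PucciIneq.of_deriv_nonpos {n : ℕ} {lam Lam p a r : ℝ} {u u' u'' : ℝ → ℝ}
    (h : PucciIneq n lam Lam p u u' u'' r) (hn : 1 ≤ n) (hlam : 0 < lam) (hlL : lam ≤ Lam)
    (ha : 0 < a) (har : a ≤ r) (hu : 0 < u r) (hx : u' r ≤ 0) :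
    u'' r ≤ -(((n : ℝ) - 1) * Lam / (lam * a)) * u' r - u r ^ (p - 1) * u r / Lam := by
  obtain ⟨-, h2⟩ := h
  have hn' : (0 : ℝ) ≤ (n : ℝ) - 1 := by
    have : (1 : ℝ) ≤ n := by exact_mod_cast hn
    linarith
  have hL : 0 < Lam := hlam.trans_le hlL
  have hr : 0 < r := ha.trans_le har
  rw [abs_of_pos hu] at h2
  have hf : 0 < u r ^ (p - 1) * u r := by positivity
  set f := u r ^ (p - 1) * u r
  have hq : u' r / r ≤ 0 := div_nonpos_of_nonpos_of_nonneg hx hr.le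
  have hqa : -(u' r) / r ≤ -(u' r) / a := div_le_div_of_nonneg_left (by linarith) ha har
  have hw : 0 ≤ ((n : ℝ) - 1) * (Lam * (-(u' r) / a)) :=
    mul_nonneg hn' (mul_nonneg hL.le (div_nonneg (by linarith) ha.le))
  have hwa : ((n : ℝ) - 1) * (Lam * (-(u' r) / r)) ≤ ((n : ℝ) - 1) * (Lam * (-(u' r) / a)) := by
    gcongr
  have e : -(((n : ℝ) - 1) * Lam / (lam * a)) * u' r
      = ((n : ℝ) - 1) * (Lam * (-(u' r) / a)) / lam := by field_simp
  have e' : ((n : ℝ) - 1) * (lam * 0 + Lam * (u' r / r))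
      = -(((n : ℝ) - 1) * (Lam * (-(u' r) / r))) := by ring
  rw [e]
  unfold Pm at h2
  rw [max_eq_right hq, min_eq_left hq, e'] at h2
  set W := ((n : ℝ) - 1) * (Lam * (-(u' r) / a))
  rcases le_total 0 (u'' r) with hy | hy
  · rw [max_eq_left hy, min_eq_right hy] at h2
    have h3 : u'' r ≤ (W - f) / lam := by
      rw [le_div_iff₀ hlam]
      linarith
    have h4 : f / Lam ≤ f / lam := div_le_div_of_nonneg_left hf.le hlam hlL
    rw [sub_div] at h3
    linarith
  · rw [max_eq_right hy, min_eq_left hy] at h2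
    have h3 : u'' r ≤ (W - f) / Lam := by
      rw [le_div_iff₀ hL]
      linarith
    have h4 : W / Lam ≤ W / lam := div_le_div_of_nonneg_left hw hlam hlL
    rw [sub_div] at h3
    linarith

/-- As long as an increasing solution stays below `M`, its slope loses only a bounded amount. -/
theorem PucciIneq.slope_lower_bound {n : ℕ} {lam Lam p a b M : ℝ} {u u' u'' : ℝ → ℝ}
    (hn : 1 ≤ n) (hlam : 0 < lam) (hlL : lam ≤ Lam) (hp : 1 < p) (ha : 0 < a)
    (hu : ∀ r ∈ Icc a b, HasDerivAt u (u' r) r) (hu' : ∀ r ∈ Icc a b, HasDerivAt u' (u'' r) r)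
    (h0 : u a = 0) (hpos : ∀ r ∈ Ioc a b, 0 < u r) (hnn : ∀ r ∈ Icc a b, 0 ≤ u' r)
    (hP : ∀ r ∈ Ioo a b, PucciIneq n lam Lam p u u' u'' r) (hM : u b ≤ M) :
    ∀ r ∈ Icc a b, u' a - ((n : ℝ) - 1) * Lam / (lam * a) * M
      - M ^ (p - 1) * M / lam * (r - a) ≤ u' r := by
  intro r hr
  have hD : 0 ≤ ((n : ℝ) - 1) * Lam / (lam * a) := by
    have h1 : (1 : ℝ) ≤ n := by exact_mod_cast hn
    exact div_nonneg (mul_nonneg (by linarith) (hlam.le.trans hlL)) (by positivity)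
  set D := ((n : ℝ) - 1) * Lam / (lam * a)
  have hle : ∀ x ∈ Icc a b, u x ≤ M := by
    intro x hx
    have := add_mul_le_of_le_hasDerivAt (c := 0) hx.2
      (fun y hy => hu y ⟨hx.1.trans hy.1, hy.2⟩)
      (fun y hy => hnn y ⟨hx.1.trans hy.1.le, hy.2.le⟩)
    linarith
  have key := add_mul_le_of_le_hasDerivAt (f := fun r => u' r + D * u r)
    (c := -(M ^ (p - 1) * M / lam)) hr.1
    (fun x hx => (hu' x ⟨hx.1, hx.2.trans hr.2⟩).add
      ((hu x ⟨hx.1, hx.2.trans hr.2⟩).const_mul D))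
    (fun x hx => by
      have hxb : x < b := hx.2.trans_le hr.2
      have hux := hpos x ⟨hx.1, hxb.le⟩
      have huM := hle x ⟨hx.1.le, hxb.le⟩
      have h1 := ((hP x ⟨hx.1, hxb⟩).of_deriv_nonneg hn hlam hlL ha hx.1.le hux
        (hnn x ⟨hx.1.le, hxb.le⟩)).2
      have h2 : u x ^ (p - 1) * u x / lam ≤ M ^ (p - 1) * M / lam := by
        have : u x ^ (p - 1) ≤ M ^ (p - 1) :=
          Real.rpow_le_rpow hux.le huM (by linarith)
        have : 0 < M := hux.trans_le huM
        gcongr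
      linarith)
  have h1 := mul_le_mul_of_nonneg_left (hle r hr) hD
  simp only [h0] at key
  linarith

/-- Proposition 3.2 (ii) (paper), uniform version: for every `ε > 0` and `α` large enough,
no positive radial arc with initial slope `α` can stay positive on the whole of
`(a, a+ε]`; i.e. the solution must return to zero within `(a, a+ε]`, so `ρ(α) < ∞` and
`ρ(α) → a` as `α → +∞`. -/
theorem return_radius_tendsto_a
    (n : ℕ) (hn : 2 ≤ n) (lam Lam p ntil : ℝ) (hlam : 0 < lam) (hlL : lam ≤ Lam) (hp : 1 < p)
    (hnt : ntil = Lam / lam * ((n : ℝ) - 1) + 1) (hnt2 : 2 < ntil)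
    (a : ℝ) (ha : 0 < a) (ε : ℝ) (hε : 0 < ε) :
    ∃ A : ℝ, 0 < A ∧ ∀ α : ℝ, A ≤ α →
      ¬ ∃ u u' u'' : ℝ → ℝ,
        (∀ r ∈ Icc a (a + ε), HasDerivAt u (u' r) r) ∧
        (∀ r ∈ Icc a (a + ε), HasDerivAt u' (u'' r) r) ∧
        ContinuousOn u'' (Icc a (a + ε)) ∧
        u a = 0 ∧ u' a = α ∧
        (∀ r ∈ Ioc a (a + ε), 0 < u r) ∧
        (∀ r ∈ Ioo a (a + ε), PucciIneq n lam Lam p u u' u'' r) := by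
  have hn1 : 1 ≤ n := by omega
  have hL : 0 < Lam := hlam.trans_le hlL
  have hD : 0 < ((n : ℝ) - 1) * Lam / (lam * a) := by
    have : (2 : ℝ) ≤ n := by exact_mod_cast hn
    exact div_pos (mul_pos (by linarith) hL) (by positivity)
  obtain ⟨D, hDdef⟩ : ∃ D, D = ((n : ℝ) - 1) * Lam / (lam * a) := ⟨_, rfl⟩
  rw [← hDdef] at hD
  obtain ⟨h, hh, hhε, hhD⟩ : ∃ h : ℝ, 0 < h ∧ 5 * h ≤ ε ∧ 4 * (D * h) ≤ 1 := by
    refine ⟨min (ε / 5) (1 / (4 * D)), by positivity, ?_, ?_⟩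
    · linarith [min_le_left (ε / 5) (1 / (4 * D))]
    · have := mul_le_mul_of_nonneg_left (min_le_right (ε / 5) (1 / (4 * D))) hD.le
      have e : D * (1 / (4 * D)) = 1 / 4 := by field_simp
      linarith
  obtain ⟨b, hb⟩ : ∃ b : ℝ, b * (h * h) = 4 * (D * h + 3) :=
    ⟨4 * (D * h + 3) / (h * h), by field_simp⟩
  obtain ⟨K, hK, hKb⟩ : ∃ K : ℝ, 0 < K ∧ ∀ x, K ≤ x → Lam * b ≤ x ^ (p - 1) := by
    obtain ⟨K, hK⟩ := Filter.eventually_atTop.1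
      ((tendsto_rpow_atTop (sub_pos.2 hp)).eventually_ge_atTop (Lam * b))
    exact ⟨max K 1, by positivity, fun x hx => hK x ((le_max_left _ _).trans hx)⟩
  have hforce : ∀ x, K ≤ x → b * x ≤ x ^ (p - 1) * x / Lam := by
    intro x hx
    rw [le_div_iff₀ hL]
    have := mul_le_mul_of_nonneg_right (hKb x hx) (hK.le.trans hx)
    linarith
  have hS : 0 ≤ (2 * K) ^ (p - 1) * (2 * K) / lam := by positivity
  refine ⟨D * (2 * K) + (2 * K) ^ (p - 1) * (2 * K) / lam * ε + 2 * K / h + 1,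
    by positivity, ?_⟩
  rintro α hα ⟨u, u', u'', hu, hu', -, h0, hα', hpos, hP⟩
  have hgrow : ∀ c, a ≤ c → c ≤ a + ε → (∀ r ∈ Icc a c, 0 ≤ u' r) → u c ≤ 2 * K →
      ∀ r ∈ Icc a c, 2 * K / h + 1 ≤ u' r := by
    intro c hac hc hnn hle r hr
    have h1 := PucciIneq.slope_lower_bound hn1 hlam hlL hp ha
      (fun x hx => hu x ⟨hx.1, hx.2.trans hc⟩) (fun x hx => hu' x ⟨hx.1, hx.2.trans hc⟩) h0
      (fun x hx => hpos x ⟨hx.1, hx.2.trans hc⟩) hnn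
      (fun x hx => hP x ⟨hx.1, hx.2.trans_le hc⟩) hle r hr
    rw [← hDdef, hα'] at h1
    have h2 : r - a ≤ ε := by linarith [hr.2]
    have := mul_le_mul_of_nonneg_left h2 hS
    linarith
  have hup : ∀ r ∈ Ioo a (a + ε), 0 ≤ u' r → u'' r ≤ -(u r ^ (p - 1) * u r / Lam) :=
    fun r hr hx => ((hP r hr).of_deriv_nonneg hn1 hlam hlL ha hr.1.le
      (hpos r ⟨hr.1, hr.2.le⟩) hx).1
  have hconc : ∀ r ∈ Ioo a (a + ε), 0 ≤ u' r → u'' r ≤ 0 := by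
    intro r hr hx
    have h1 := hup r hr hx
    have := hpos r ⟨hr.1, hr.2.le⟩
    have : 0 < u r ^ (p - 1) * u r / Lam := by positivity
    linarith
  have hα0 : 0 < u' a := by
    have h1 : 0 ≤ (2 * K) ^ (p - 1) * (2 * K) / lam * ε := by positivity
    have h2 : 0 ≤ D * (2 * K) := by positivity
    have h3 : 0 ≤ 2 * K / h := by positivity
    linarith
  obtain ⟨r₀, hr₀, hr₀neg⟩ : ∃ r ∈ Icc a (a + 2 * h), u' r < 0 := by
    by_contra! hnn
    have hKh : K ≤ u (a + h) := by
      by_contra! hlt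
      have h1 := hgrow (a + h) (by linarith) (by linarith)
        (fun r hr => hnn r ⟨hr.1, by linarith [hr.2]⟩) (by linarith)
      have h2 := add_mul_le_of_le_hasDerivAt (by linarith : a ≤ a + h)
        (fun r hr => hu r ⟨hr.1, by linarith [hr.2]⟩)
        (fun r hr => h1 r (Ioo_subset_Icc_self hr))
      have e : (2 * K / h + 1) * (a + h - a) = 2 * K + h := by field_simp; ring
      linarith
    obtain ⟨r, hr, hr'⟩ := exists_deriv_neg_of_concave (u := u) (u' := u') (u'' := u'') (b := b)
      hh (by rw [hb]; nlinarith [mul_pos hD hh]) hK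
      (fun r hr => hu r ⟨hr.1, by linarith [hr.2]⟩) (fun r hr => hu' r ⟨hr.1, by linarith [hr.2]⟩)
      h0 hKh (fun r hr => hconc r ⟨hr.1, by linarith [hr.2]⟩)
      (fun r hr hx hKr => by
        have h1 := hup r ⟨hr.1, by linarith [hr.2]⟩ hx
        have h2 := hforce (u r) hKr
        linarith)
    exact absurd (hnn r hr) (not_le.2 hr')
  have hcont : ContinuousOn u' (Icc a (a + 2 * h)) := fun x hx =>
    (hu' x ⟨hx.1, by linarith [hx.2]⟩).continuousAt.continuousWithinAt
  have hcpt : IsCompact (Icc a (a + 2 * h) ∩ u' ⁻¹' Iic 0) :=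
    isCompact_Icc.of_isClosed_subset
      (hcont.preimage_isClosed_of_isClosed isClosed_Icc isClosed_Iic) inter_subset_left
  obtain ⟨τ, ⟨hτ, hτ0⟩, hmin⟩ := hcpt.exists_isLeast ⟨r₀, hr₀, hr₀neg.le⟩
  simp only [mem_preimage, mem_Iic] at hτ0
  have hbefore : ∀ r ∈ Ico a τ, 0 < u' r := by
    intro r hr
    by_contra! hn
    exact absurd (hmin ⟨⟨hr.1, hr.2.le.trans hτ.2⟩, hn⟩) (not_le.2 hr.2)
  have haτ : a < τ := by
    rcases hτ.1.eq_or_lt with e | e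
    · rw [← e] at hτ0
      linarith
    · exact e
  have hτε : τ + 3 * h ≤ a + ε := by linarith [hτ.2]
  have hτzero : u' τ = 0 := by
    refine le_antisymm hτ0 ?_
    by_contra! hlt
    obtain ⟨x, hx, hx0⟩ := intermediate_value_Icc' haτ.le
      (hcont.mono (Icc_subset_Icc_right hτ.2)) ⟨hlt.le, hα0.le⟩
    rcases hx.2.eq_or_lt with e | e
    · rw [e] at hx0
      linarith
    · linarith [hbefore x ⟨hx.1, e⟩]
  have hmax : 2 * K ≤ u τ := by
    by_contra! hlt
    have h1 := hgrow τ haτ.le (by linarith)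
      (fun r hr => by
        rcases hr.2.eq_or_lt with e | e
        · rw [e, hτzero]
        · exact (hbefore r ⟨hr.1, e⟩).le) hlt.le τ ⟨haτ.le, le_rfl⟩
    have h2 : 0 < 2 * K / h := by positivity
    linarith
  have hafter : ∀ r ∈ Icc τ (τ + 3 * h), u' r ≤ 0 :=
    nonpos_of_hasDerivAt_nonpos_of_pos
      (fun r hr => hu' r ⟨haτ.le.trans hr.1, hr.2.trans hτε⟩) hτ0
      (fun r hr hx => hconc r ⟨haτ.trans hr.1, hr.2.trans_le hτε⟩ hx.le)
  have hdown : ∀ r ∈ Ioo τ (τ + 3 * h),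
      u'' r ≤ -D * u' r - u r ^ (p - 1) * u r / Lam := by
    intro r hr
    have har : a < r := haτ.trans hr.1
    have hrε : r < a + ε := hr.2.trans_le hτε
    rw [hDdef]
    exact (hP r ⟨har, hrε⟩).of_deriv_nonpos hn1 hlam hlL ha har.le (hpos r ⟨har, hrε.le⟩)
      (hafter r (Ioo_subset_Icc_self hr))
  have hend := nonpos_of_decay hh hD.le hhD hb hK
    (fun r hr => hu r ⟨haτ.le.trans hr.1, hr.2.trans hτε⟩)
    (fun r hr => hu' r ⟨haτ.le.trans hr.1, hr.2.trans hτε⟩) hafter hτzero hmax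
    (fun r hr => by
      have h1 := hdown r hr
      have := hpos r ⟨haτ.trans hr.1, hr.2.le.trans hτε⟩
      have : 0 < u r ^ (p - 1) * u r / Lam := by positivity
      linarith)
    (fun r hr hKr => by
      have h1 := hdown r hr
      have h2 := hforce (u r) hKr
      linarith)
  exact absurd (hpos (τ + 3 * h) ⟨by linarith, hτε⟩) (not_lt.2 hend)
end
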